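/- arXiv:2501.08526 — 5 statements merged into one kernel-verified Lean document; each statement's English description precedes it below -/
import Mathlib

section
/- Let A be a unital C*-algebra over ℂ admitting a matricial chain (n_k, A_k). Let p be a prime and m a natural number. If there exists an injective unital *-algebra homomorphism from the matrix algebra M_{p^m}(ℂ) into A, then there exists k such that p^m divides n_k. -/
/-!
A self-adjoint element near `φ (diag (t i))`, with the `t i` distinct, has spectrum near
`{t i}`, so its spectral projections `q i` are close to the images of the diagonal matrix units and
sum exactly to `1`. By density such an element can be found in some `A_k ≅ M_{n k}(ℂ)`, together
with approximations of the off-diagonal matrix units. The latter exhibit each `q i` as a multiple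
`c * q j * d` of each `q j`, so all the `q i` have the same rank `r`. Taking traces in
`∑ i, q i = 1` gives `n k = N * r`, where `N` is the size of the embedded matrices.
-/

open Filter Topology
open scoped ComplexStarModule

section Rank

variable {K : Type*} [Field K] {m ι : Type*} [Fintype m] [Fintype ι]

lemma trace_eq_rank_of_isIdempotentElem {q : Matrix m m K} (hq : IsIdempotentElem q) :
    q.trace = q.rank := by
  classical
  have hproj := LinearMap.IsIdempotentElem.isProj_range _ (hq.map (Matrix.toLinAlgEquiv' (R := K)))
  rw [← Matrix.trace_toLin'_eq]
  exact hproj.trace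

lemma card_dvd_card_of_rank_le [DecidableEq m] [CharZero K] {q : ι → Matrix m m K}
    (hq : ∀ i, IsIdempotentElem (q i)) (hsum : ∑ i, q i = 1)
    (hrank : ∀ i j, (q i).rank ≤ (q j).rank) : Fintype.card ι ∣ Fintype.card m := by
  have hcard : Fintype.card m = ∑ i, (q i).rank := by
    rw [← Nat.cast_inj (R := K), ← Matrix.trace_one, ← hsum, Matrix.trace_sum, Nat.cast_sum]
    exact Finset.sum_congr rfl fun i _ => trace_eq_rank_of_isIdempotentElem (hq i)
  rcases isEmpty_or_nonempty ι with _ | ⟨⟨i₀⟩⟩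
  · simp [hcard]
  · refine ⟨(q i₀).rank, ?_⟩
    simp [hcard, fun i => (hrank i i₀).antisymm (hrank i₀ i)]

lemma exists_mul_mul_eq_of_norm_sub_lt_one {R : Type*} [NormedRing R] [CompleteSpace R]
    {p q a b : R} (hp : IsIdempotentElem p) (h : ‖p * a * q * b * p - p‖ < 1) :
    ∃ c d, c * q * d = p := by
  -- `1 - p + p * a * q * b * p` is within distance `1` of `1`, hence invertible.
  let u : Rˣ := Units.oneSub (p - p * a * q * b * p) (by rwa [norm_sub_rev])
  have hpu : p * u = p * a * q * b * p := by
    simp only [u, Units.val_oneSub, mul_sub, mul_one, ← mul_assoc, hp.eq, sub_sub_cancel]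
  refine ⟨p * a, b * p * ↑u⁻¹, ?_⟩
  rw [← mul_assoc, ← mul_assoc, ← hpu, Units.mul_inv_cancel_right]

lemma card_dvd_card_of_norm_sub_lt_one [DecidableEq m] [CharZero K] {R : Type*} [NormedRing R]
    [CompleteSpace R] (ψ : R →+* Matrix m m K) {q : ι → R} {x : ι × ι → R}
    (hq : ∀ i, IsIdempotentElem (q i)) (hsum : ∑ i, q i = 1)
    (hx : ∀ i j, ‖q i * x (i, j) * q j * x (j, i) * q i - q i‖ < 1) :
    Fintype.card ι ∣ Fintype.card m := by
  refine card_dvd_card_of_rank_le (q := fun i => ψ (q i)) (fun i => (hq i).map ψ)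
    (by rw [← map_sum, hsum, map_one]) fun i j => ?_
  obtain ⟨c, d, hcd⟩ := exists_mul_mul_eq_of_norm_sub_lt_one (hq i) (hx i j)
  calc (ψ (q i)).rank = (ψ c * ψ (q j) * ψ d).rank := by rw [← hcd, map_mul, map_mul]
    _ ≤ (ψ c * ψ (q j)).rank := Matrix.rank_mul_le_left _ _
    _ ≤ (ψ (q j)).rank := Matrix.rank_mul_le_right _ _

end Rank

section Density

variable {X κ ι : Type*} [TopologicalSpace X] [Preorder κ] {s : κ → Set X}

lemma eventually_exists_mem_of_dense_iUnion (hs : Monotone s) (hdense : Dense (⋃ k, s k)) {x : X}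
    {P : X → Prop} (hP : ∀ᶠ y in 𝓝 x, P y) : ∀ᶠ k in atTop, ∃ y ∈ s k, P y := by
  obtain ⟨y, hPy, hy⟩ := mem_closure_iff_nhds.1 (hdense x) _ hP
  obtain ⟨k, hk⟩ := Set.mem_iUnion.1 hy
  filter_upwards [eventually_ge_atTop k] with l hl
  exact ⟨y, hs hl hk, hPy⟩

lemma eventually_exists_pi_of_dense_iUnion [Finite ι] (hs : Monotone s)
    (hdense : Dense (⋃ k, s k)) {x : ι → X} {P : (ι → X) → Prop} (hP : ∀ᶠ y in 𝓝 x, P y) :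
    ∀ᶠ k in atTop, ∃ y : ι → s k, P fun i => y i := by
  rw [nhds_pi, Filter.Eventually, Filter.mem_pi'] at hP
  obtain ⟨I, V, hV, hVP⟩ := hP
  filter_upwards [eventually_all.2 fun i => eventually_exists_mem_of_dense_iUnion hs hdense (hV i)]
    with k hk
  choose y hys hyV using hk
  exact ⟨fun i => ⟨y i, hys i⟩, hVP fun i _ => hyV i⟩

end Density

section DisjointOpenSets

lemma exists_mem_isOpen_pairwise_disjoint (ι X : Type*) [Finite ι] [Infinite X] [TopologicalSpace X]
    [T2Space X] : ∃ (t : ι → X) (U : ι → Set X), (∀ i, t i ∈ U i) ∧ (∀ i, IsOpen (U i)) ∧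
      Pairwise (Function.onFun Disjoint U) := by
  obtain ⟨e, he⟩ := Countable.exists_injective_nat ι
  let t : ι → X := Infinite.natEmbedding X ∘ e
  have ht : Function.Injective t := (Infinite.natEmbedding X).injective.comp he
  obtain ⟨V, hV, hVdisj⟩ := (Set.finite_range t).t2_separation
  refine ⟨t, V ∘ t, fun i => (hV (t i)).1, fun i => (hV (t i)).2, fun i j hij => ?_⟩
  exact hVdisj (Set.mem_range_self i) (Set.mem_range_self j) (ht.ne hij)

variable {X ι : Type*} {U : ι → Set X}

lemma continuousOn_indicator_one_iUnion [TopologicalSpace X] (hU : ∀ i, IsOpen (U i))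
    (hdisj : Pairwise (Function.onFun Disjoint U)) (i : ι) :
    ContinuousOn ((U i).indicator (1 : X → ℝ)) (⋃ j, U j) := by
  intro x hx
  obtain ⟨j, hj⟩ := Set.mem_iUnion.1 hx
  refine ContinuousAt.continuousWithinAt ?_
  by_cases hij : i = j
  · subst hij
    exact (continuousAt_const (y := (1 : ℝ))).congr
      ((Set.eqOn_indicator (f := 1)).symm.eventuallyEq_of_mem ((hU i).mem_nhds hj))
  · refine (continuousAt_const (y := (0 : ℝ))).congr ?_
    filter_upwards [(hU j).mem_nhds hj] with y hy
    rw [Set.indicator_of_notMem ((hdisj hij).notMem_of_mem_right hy)]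

lemma sum_indicator_one_of_mem_iUnion [Fintype ι] (hdisj : Pairwise (Function.onFun Disjoint U))
    {x : X} (hx : x ∈ ⋃ i, U i) : ∑ i, (U i).indicator (1 : X → ℝ) x = 1 := by
  obtain ⟨j, hj⟩ := Set.mem_iUnion.1 hx
  rw [Fintype.sum_eq_single j fun i hij =>
    Set.indicator_of_notMem ((hdisj hij).notMem_of_mem_right hj) 1]
  exact Set.indicator_of_mem hj 1

end DisjointOpenSets

section SpectralProjection

variable {A : Type*} [CStarAlgebra A]

/-- The spectral projection of the real part of `a` for a set `V ⊆ ℝ`. It has this meaning only if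
`V` is relatively clopen in the spectrum of the real part; otherwise `cfc` returns `0`. Passing to
the real part makes the map total in `a`. -/
noncomputable def realSpectralProjection (V : Set ℝ) (a : A) : A :=
  cfc (V.indicator 1) (ℜ a : A)

lemma realSpectralProjection_mem {B : StarSubalgebra ℂ A} (hB : IsClosed (B : Set A)) (V : Set ℝ)
    {a : A} (ha : a ∈ B) : realSpectralProjection V a ∈ B := by
  refine cfc_mem (hs := hB) (𝕜' := ℂ) _ ?_
  rw [realPart_apply_coe, ← Complex.coe_smul]
  exact B.smul_mem (add_mem ha (star_mem ha)) _

lemma eventually_spectrum_realPart_subset {U : Set ℝ} (hU : IsOpen U) {a : A}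
    (ha : spectrum ℝ (ℜ a : A) ⊆ U) : ∀ᶠ b in 𝓝 a, spectrum ℝ (ℜ b : A) ⊆ U := by
  have hcont : Continuous fun b : A => (ℜ b : A) := by fun_prop
  exact hcont.continuousAt.eventually
    (((upperHemicontinuous_spectrum ℝ A).upperHemicontinuousAt _).forall_isOpen U hU ha)

lemma continuousAt_cfc_realPart {U : Set ℝ} (hU : IsOpen U) {f : ℝ → ℝ} (hf : ContinuousOn f U)
    {a : A} (ha : spectrum ℝ (ℜ a : A) ⊆ U) : ContinuousAt (fun b => cfc f (ℜ b : A)) a := by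
  have hcont : Continuous fun b : A => (ℜ b : A) := by fun_prop
  have hU_nhds : U ∈ 𝓝ˢ (⋃ b ∈ {b : A | spectrum ℝ (ℜ b : A) ⊆ U}, spectrum ℝ (ℜ b : A)) :=
    hU.mem_nhdsSet.2 (Set.iUnion₂_subset fun _ hb => hb)
  exact (hcont.continuousOn.cfc_of_mem_nhdsSet f hU_nhds (fun b _ => (ℜ b).2) hf).continuousAt
    (eventually_spectrum_realPart_subset hU ha)

variable {ι : Type*} {U : ι → Set ℝ}

lemma isIdempotentElem_realSpectralProjection (hU : ∀ i, IsOpen (U i))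
    (hdisj : Pairwise (Function.onFun Disjoint U)) {a : A}
    (ha : spectrum ℝ (ℜ a : A) ⊆ ⋃ i, U i) (i : ι) :
    IsIdempotentElem (realSpectralProjection (U i) a) := by
  have hcont := (continuousOn_indicator_one_iUnion hU hdisj i).mono ha
  rw [IsIdempotentElem, realSpectralProjection, ← cfc_mul _ _ _ hcont hcont]
  congr 1 with x
  by_cases hx : x ∈ U i <;> simp [hx]

lemma sum_realSpectralProjection [Fintype ι] (hU : ∀ i, IsOpen (U i))
    (hdisj : Pairwise (Function.onFun Disjoint U)) {a : A}
    (ha : spectrum ℝ (ℜ a : A) ⊆ ⋃ i, U i) : ∑ i, realSpectralProjection (U i) a = 1 := by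
  simp only [realSpectralProjection]
  rw [← cfc_sum_univ _ _ fun i => (continuousOn_indicator_one_iUnion hU hdisj i).mono ha,
    ← cfc_one ℝ (ℜ a : A)]
  refine cfc_congr fun x hx => ?_
  simpa using sum_indicator_one_of_mem_iUnion hdisj (ha hx)

section Diagonal

variable (π : (ι → ℂ) →⋆ₐ[ℂ] A) (t : ι → ℝ)

lemma isSelfAdjoint_map_ofReal : IsSelfAdjoint (π fun i => (t i : ℂ)) :=
  IsSelfAdjoint.map (funext fun i => Complex.conj_ofReal (t i)) π

lemma spectrum_map_ofReal_subset : spectrum ℝ (π fun i => (t i : ℂ)) ⊆ Set.range t := by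
  refine (AlgHom.spectrum_apply_subset (π.toAlgHom.restrictScalars ℝ) _).trans ?_
  rw [Pi.spectrum_eq]
  exact Set.iUnion_subset fun i => (CFC.spectrum_algebraMap_subset (A := ℂ) (t i)).trans
    (Set.singleton_subset_iff.2 (Set.mem_range_self i))

lemma cfc_map_ofReal [Finite ι] (f : ℝ → ℝ) :
    cfc f (π fun i => (t i : ℂ)) = π fun i => (f (t i) : ℂ) := by
  classical
  let P : Polynomial ℝ := Lagrange.interpolate (Set.finite_range t).toFinset id f
  have hP (i : ι) : P.eval (t i) = f (t i) :=
    Lagrange.eval_interpolate_at_node f Function.injective_id.injOn (by simp)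
  calc cfc f (π fun i => (t i : ℂ)) = cfc P.eval (π fun i => (t i : ℂ)) :=
        cfc_congr fun x hx => by
          obtain ⟨i, rfl⟩ := spectrum_map_ofReal_subset π t hx
          exact (hP i).symm
    _ = Polynomial.aeval (π fun i => (t i : ℂ)) P :=
        cfc_polynomial _ _ (isSelfAdjoint_map_ofReal π t)
    _ = π (Polynomial.aeval (fun i => (t i : ℂ)) P) :=
        Polynomial.aeval_algHom_apply (π.toAlgHom.restrictScalars ℝ) _ _
    _ = π fun i => (f (t i) : ℂ) := by
        congr 1 with i
        calc Polynomial.aeval (fun i => (t i : ℂ)) P i = Polynomial.aeval (t i : ℂ) P :=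
              (Polynomial.aeval_algHom_apply (Pi.evalAlgHom ℝ (fun _ => ℂ) i) _ P).symm
          _ = ((P.eval (t i) : ℝ) : ℂ) :=
              Polynomial.aeval_algebraMap_apply_eq_algebraMap_eval (t i) P
          _ = (f (t i) : ℂ) := by rw [hP]

lemma spectrum_realPart_map_subset {t : ι → ℝ} (ht : ∀ i, t i ∈ U i) :
    spectrum ℝ (ℜ (π fun i => (t i : ℂ)) : A) ⊆ ⋃ i, U i := by
  rw [(isSelfAdjoint_map_ofReal π t).coe_realPart]
  exact (spectrum_map_ofReal_subset π t).trans
    (Set.range_subset_iff.2 fun i => Set.mem_iUnion_of_mem i (ht i))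

lemma realSpectralProjection_map [Finite ι] [DecidableEq ι]
    (hdisj : Pairwise (Function.onFun Disjoint U)) {t : ι → ℝ} (ht : ∀ i, t i ∈ U i) (i : ι) :
    realSpectralProjection (U i) (π fun j => (t j : ℂ)) = π (Pi.single i 1) := by
  rw [realSpectralProjection, (isSelfAdjoint_map_ofReal π t).coe_realPart, cfc_map_ofReal]
  congr 1 with j
  obtain rfl | hij := eq_or_ne i j
  · simp [ht i]
  · simp [(hdisj hij).notMem_of_mem_right (ht j), Pi.single_eq_of_ne' hij]

end Diagonal

lemma eventually_exists_idempotents_of_dense_iUnion [Fintype ι] [DecidableEq ι] {κ : Type*}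
    [Preorder κ] {B : κ → StarSubalgebra ℂ A} (hmono : Monotone B)
    (hclosed : ∀ k, IsClosed (B k : Set A)) (hdense : Dense (⋃ k, (B k : Set A)))
    (π : (ι → ℂ) →⋆ₐ[ℂ] A) {P : (ι → A) → Prop}
    (hP : ∀ᶠ q in 𝓝 fun i => π (Pi.single i 1), P q) :
    ∀ᶠ k in atTop, ∃ q : ι → B k, (∀ i, IsIdempotentElem (q i)) ∧ ∑ i, q i = 1 ∧
      P fun i => q i := by
  obtain ⟨t, U, htU, hU, hdisj⟩ := exists_mem_isOpen_pairwise_disjoint ι ℝ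
  have hspec := spectrum_realPart_map_subset π htU
  have hcont : ContinuousAt (fun (a : A) i => realSpectralProjection (U i) a)
      (π fun i => (t i : ℂ)) :=
    continuousAt_pi.2 fun i => continuousAt_cfc_realPart (isOpen_iUnion hU)
      (continuousOn_indicator_one_iUnion hU hdisj i) hspec
  simp only [← realSpectralProjection_map π hdisj htU] at hP
  filter_upwards [eventually_exists_mem_of_dense_iUnion (s := fun k => (B k : Set A))
    (SetLike.coe_mono.comp hmono) hdense ((hcont.eventually hP).and
      (eventually_spectrum_realPart_subset (isOpen_iUnion hU) hspec))]
  rintro k ⟨a, haB, haP, ha⟩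
  refine ⟨fun i => ⟨realSpectralProjection (U i) a, realSpectralProjection_mem (hclosed k) _ haB⟩,
    fun i => Subtype.ext (isIdempotentElem_realSpectralProjection hU hdisj ha i), ?_, haP⟩
  exact Subtype.ext (by simpa using sum_realSpectralProjection hU hdisj ha)

end SpectralProjection

section MatricialChain

variable {A : Type*} [CStarAlgebra A] {ι : Type*} [Fintype ι] [DecidableEq ι]

/-- The inclusion of the diagonal matrices, as a star homomorphism; `Matrix.diagonalAlgHom` does not
record compatibility with `star`. -/
def diagonalStarAlgHom (ι : Type*) [Fintype ι] [DecidableEq ι] :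
    (ι → ℂ) →⋆ₐ[ℂ] Matrix ι ι ℂ where
  toAlgHom := Matrix.diagonalAlgHom ℂ
  map_star' v := (Matrix.diagonal_conjTranspose v).symm

lemma diagonalStarAlgHom_single (i : ι) :
    diagonalStarAlgHom ι (Pi.single i 1) = Matrix.single i i 1 :=
  Matrix.diagonal_single i 1

lemma eventually_norm_matrixUnits_lt_one (φ : Matrix ι ι ℂ →⋆ₐ[ℂ] A) :
    ∀ᶠ y : (ι × ι → A) × (ι → A) in
      𝓝 (fun ij => φ (Matrix.single ij.1 ij.2 1)) ×ˢ 𝓝 (fun i => φ (Matrix.single i i 1)),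
      ∀ i j, ‖y.2 i * y.1 (i, j) * y.2 j * y.1 (j, i) * y.2 i - y.2 i‖ < 1 := by
  rw [← nhds_prod_eq]
  refine eventually_all.2 fun i => eventually_all.2 fun j => ?_
  refine ContinuousAt.eventually_lt (by fun_prop) continuousAt_const ?_
  simp [← map_mul]

theorem uhf_embedding_divides_general {κ : Type*} [Preorder κ] [IsDirectedOrder κ]
    (n : κ → ℕ) (B : κ → StarSubalgebra ℂ A) (hmono : Monotone B)
    (hiso : ∀ k, Nonempty (B k ≃⋆ₐ[ℂ] Matrix (Fin (n k)) (Fin (n k)) ℂ))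
    (hdense : Dense (⋃ k, (B k : Set A))) (φ : Matrix ι ι ℂ →⋆ₐ[ℂ] A) :
    ∃ k, Fintype.card ι ∣ n k := by
  obtain ⟨k₀, -⟩ := Set.nonempty_iUnion.1 hdense.nonempty
  have : Nonempty κ := ⟨k₀⟩
  have hfin (k : κ) : FiniteDimensional ℂ (B k) :=
    (hiso k).elim fun ψ => Module.Finite.equiv ψ.symm.toAlgEquiv.toLinearEquiv
  have hclosed (k : κ) : IsClosed (B k : Set A) :=
    (Subalgebra.toSubmodule (B k).toSubalgebra).closed_of_finiteDimensional
  obtain ⟨Px, hPx, Pq, hPq, hlt⟩ := eventually_prod_iff.1 (eventually_norm_matrixUnits_lt_one φ)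
  have hunits := eventually_exists_pi_of_dense_iUnion (s := fun k => (B k : Set A))
    (SetLike.coe_mono.comp hmono) hdense hPx
  have hidem := eventually_exists_idempotents_of_dense_iUnion hmono hclosed hdense
    (φ.comp (diagonalStarAlgHom ι)) (by simpa [diagonalStarAlgHom_single] using hPq)
  obtain ⟨k, ⟨x, hx⟩, q, hq, hsum, hqP⟩ := (hunits.and hidem).exists
  obtain ⟨ψ⟩ := hiso k
  have : CompleteSpace (B k) := FiniteDimensional.complete ℂ (B k)
  refine ⟨k, ?_⟩
  simpa using card_dvd_card_of_norm_sub_lt_one (ψ : B k →+* Matrix (Fin (n k)) (Fin (n k)) ℂ)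
    hq hsum (hlt hx hqP)

end MatricialChain

/-- If a unital C*-algebra `A` admits a matricial chain `(n k, Ak k)` and
`M_{p^m}(ℂ)` unitally *-embeds into `A` for a prime `p`, then `p^m` divides some `n k`. -/
theorem uhf_embedding_divides
    {A : Type*} [CStarAlgebra A]
    (n : ℕ → ℕ) (Ak : ℕ → StarSubalgebra ℂ A)
    (hpos : ∀ k, 0 < n k)
    (hmono : ∀ k, Ak k ≤ Ak (k + 1))
    (hiso : ∀ k, Nonempty ((Ak k) ≃⋆ₐ[ℂ] Matrix (Fin (n k)) (Fin (n k)) ℂ))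
    (hdense : Dense (⋃ k, (Ak k : Set A)))
    (p m : ℕ) (hp : p.Prime)
    (φ : Matrix (Fin (p ^ m)) (Fin (p ^ m)) ℂ →⋆ₐ[ℂ] A)
    (hφ : Function.Injective φ) :
    ∃ k, p ^ m ∣ n k := by
  simpa using uhf_embedding_divides_general n Ak (monotone_nat_of_le_succ hmono) hiso hdense φ
end

section
/- Let A be a unital C*-algebra over ℂ admitting a matricial chain (n_k, A_k). Then for every prime p and every natural number m, the following are equivalent: (i) there exists an injective unital *-algebra homomorphism from M_{p^m}(ℂ) into A; (ii) there exists k such that p^m divides n_k. Consequently, the supernatural number exponent ε_A(p) = sup{m : p^m divides some n_k} (computed in ℕ∞) equals sup{m : M_{p^m}(ℂ) admits an injective unital *-homomorphism into A}, and in particular does not depend on the choice of matricial chain. -/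
/-!
A unital C⋆-algebra `A` with a dense directed union of matrix subalgebras `B i ≅ M_{n i}(ℂ)`
carries a tracial state `τ`: the states of `A` that are tracial on `B i` form a weak-⋆ compact set,
nonempty by Hahn–Banach, and these sets are directed. If `M_N(ℂ)` maps unitally to `A`, the image
`p` of a diagonal matrix unit has `N * τ p = 1`, because a tracial functional on a matrix algebra is
a multiple of the trace. A projection `q ∈ B i` close enough to `p` is conjugate to it, so
`τ q = τ p`, whereas `n i * τ q` is the rank of an idempotent matrix. Hence `n i = N * rank q`.
-/

open Matrix Metric Set Topology
open scoped Kronecker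

section Tracial

/-- Invariance of a function under exchanging two factors, the defining identity of a trace. It is
stated for plain functions so that it applies to all kinds of bundled linear functionals. -/
def IsTracial {A R : Type*} [Mul A] (f : A → R) : Prop :=
  ∀ a b, f (a * b) = f (b * a)

theorem IsTracial.comp {A B R F : Type*} [Mul A] [Mul B] [FunLike F B A] [MulHomClass F B A]
    {f : A → R} (hf : IsTracial f) (φ : F) : IsTracial (f ∘ φ) := fun a b ↦ by
  simp only [Function.comp_apply, map_mul, hf (φ a)]

theorem IsTracial.eq_of_isConj {A R : Type*} [Monoid A] {f : A → R} (hf : IsTracial f) {a b : A}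
    (hab : IsConj a b) : f a = f b := by
  obtain ⟨u, hu⟩ := hab
  calc f a = f (↑u⁻¹ * (u * a)) := by rw [Units.inv_mul_cancel_left]
    _ = f (b * u * ↑u⁻¹) := by rw [hu.eq, hf]
    _ = f b := by rw [Units.mul_inv_cancel_right]

theorem isTracial_trace {m R : Type*} [Fintype m] [NonUnitalCommSemiring R] :
    IsTracial (trace : Matrix m m R → R) :=
  trace_mul_comm

section Matrix

variable {m R M : Type*} [Fintype m] [DecidableEq m] [CommSemiring R] [AddCommMonoid M] [Module R M]
  {f : Matrix m m R →ₗ[R] M}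

theorem IsTracial.apply_single_of_ne (hf : IsTracial f) {i j : m} (hij : i ≠ j) (c : R) :
    f (single i j c) = 0 := by
  have h : single i j c = single i i 1 * single i j c := by simp
  rw [h, hf, single_mul_single_of_ne _ _ _ _ hij.symm, map_zero]

theorem IsTracial.apply_single_self_eq (hf : IsTracial f) (i j : m) (c : R) :
    f (single i i c) = f (single j j c) := by
  simpa using hf (single i j 1) (single j i c)

theorem IsTracial.card_nsmul_apply_single_self (hf : IsTracial f) (i : m) (c : R) :
    Fintype.card m • f (single i i c) = c • f 1 := by
  calc Fintype.card m • f (single i i c) = ∑ j, f (single j j c) := by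
        simp [hf.apply_single_self_eq _ i]
    _ = c • f 1 := by simp [← sum_single_one, Finset.smul_sum, ← map_smul]

theorem IsTracial.card_nsmul_apply (hf : IsTracial f) (a : Matrix m m R) :
    Fintype.card m • f a = a.trace • f 1 := by
  have hdiag : f a = ∑ i, f (single i i (a i i)) := by
    conv_lhs => rw [matrix_eq_sum_single a]
    simp only [map_sum]
    refine Finset.sum_congr rfl fun i _ ↦ Finset.sum_eq_single i (fun j _ hji ↦ ?_) (by simp)
    exact hf.apply_single_of_ne hji.symm _
  simp only [hdiag, Finset.smul_sum, hf.card_nsmul_apply_single_self, trace, diag_apply,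
    Finset.sum_smul]

end Matrix

theorem exists_trace_eq_natCast_of_isIdempotentElem {m K : Type*} [Fintype m] [Field K]
    {q : Matrix m m K} (hq : IsIdempotentElem q) : ∃ r : ℕ, q.trace = r := by
  classical
  have hproj := LinearMap.IsIdempotentElem.isProj_range (toLin' q) (hq.map toLinAlgEquiv')
  exact ⟨_, (trace_toLin'_eq q).symm.trans hproj.trace⟩

theorem IsTracial.exists_card_nsmul_apply_eq_natCast {m K : Type*} [Fintype m] [DecidableEq m]
    [Field K] {f : Matrix m m K →ₗ[K] K} (hf : IsTracial f) (hf1 : f 1 = 1) {q : Matrix m m K}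
    (hq : IsIdempotentElem q) : ∃ r : ℕ, Fintype.card m • f q = r := by
  simpa [hf.card_nsmul_apply, hf1] using exists_trace_eq_natCast_of_isIdempotentElem hq

end Tracial

section TracialState

/-- Tracial states of a unital normed algebra, a state being a functional of norm at most one that
takes the value one at `1`; on a C⋆-algebra this amounts to positivity and normalisation. -/
structure IsTracialState {𝕜 A : Type*} [RCLike 𝕜] [NormedRing A] [NormedAlgebra 𝕜 A]
    (τ : StrongDual 𝕜 A) : Prop where
  norm_le_one : ‖τ‖ ≤ 1
  map_one : τ 1 = 1
  isTracial : IsTracial τ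

section Directed

variable {𝕜 A : Type*} [RCLike 𝕜] [NormedRing A] [NormedAlgebra 𝕜 A]

/-- The functionals in the unit ball of the dual of `A`, with its weak-⋆ topology, that restrict to
tracial states on `B`. -/
def tracialStatesOn (B : Subalgebra 𝕜 A) : Set (WeakDual 𝕜 A) :=
  WeakDual.toStrongDual ⁻¹' closedBall 0 1 ∩
    {τ | τ 1 = 1 ∧ ∀ a ∈ B, ∀ b ∈ B, τ (a * b) = τ (b * a)}

theorem tracialStatesOn_antitone : Antitone (tracialStatesOn (𝕜 := 𝕜) (A := A)) :=
  fun _ _ hBC _ hτ ↦ ⟨hτ.1, hτ.2.1, fun a ha b hb ↦ hτ.2.2 a (hBC ha) b (hBC hb)⟩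

theorem isCompact_tracialStatesOn (B : Subalgebra 𝕜 A) : IsCompact (tracialStatesOn B) := by
  refine (WeakDual.isCompact_closedBall 0 1).inter_right ?_
  simp only [ofPred_and, ofPred_forall]
  refine (isClosed_eq (WeakDual.eval_continuous _) continuous_const).inter ?_
  exact isClosed_biInter fun a _ ↦ isClosed_biInter fun b _ ↦
    isClosed_eq (WeakDual.eval_continuous _) (WeakDual.eval_continuous _)

theorem IsTracialState.tracialStatesOn_nonempty {B : Subalgebra 𝕜 A} {σ : StrongDual 𝕜 B}
    (hσ : IsTracialState σ) : (tracialStatesOn B).Nonempty := by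
  obtain ⟨τ, hτσ, hτ⟩ := exists_extension_norm_eq (Subalgebra.toSubmodule B) σ
  refine ⟨StrongDual.toWeakDual τ, by simpa using hτ.trans_le hσ.norm_le_one,
    (hτσ (1 : B)).trans hσ.map_one, fun a ha b hb ↦ ?_⟩
  let a' : B := ⟨a, ha⟩
  let b' : B := ⟨b, hb⟩
  exact (hτσ (a' * b')).trans <| (hσ.isTracial a' b').trans (hτσ (b' * a')).symm

theorem isTracial_of_dense {A R : Type*} [TopologicalSpace A] [Mul A] [ContinuousMul A]
    [TopologicalSpace R] [T2Space R] {f : A → R} (hf : Continuous f) {s : Set A} (hs : Dense s)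
    (h : ∀ a ∈ s, ∀ b ∈ s, f (a * b) = f (b * a)) : IsTracial f := by
  have hss : ∀ x ∈ s ×ˢ s, f (x.1 * x.2) = f (x.2 * x.1) := fun x hx ↦ h _ hx.1 _ hx.2
  exact fun a b ↦ congrFun (Continuous.ext_on (hs.prod hs) (by fun_prop) (by fun_prop) hss) (a, b)

theorem exists_isTracialState_of_directed {ι : Type*} [Nonempty ι] {B : ι → Subalgebra 𝕜 A}
    (hdir : Directed (· ≤ ·) B) (hdense : Dense (⋃ i, (B i : Set A)))
    (hB : ∀ i, ∃ σ : StrongDual 𝕜 (B i), IsTracialState σ) :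
    ∃ τ : StrongDual 𝕜 A, IsTracialState τ := by
  obtain ⟨τ, hτ⟩ := IsCompact.nonempty_iInter_of_directed_nonempty_isCompact_isClosed
    (fun i ↦ tracialStatesOn (B i))
    (hdir.mono_comp (g := tracialStatesOn) _ fun _ _ h ↦ tracialStatesOn_antitone h)
    (fun i ↦ (hB i).elim fun _ hσ ↦ hσ.tracialStatesOn_nonempty)
    (fun i ↦ isCompact_tracialStatesOn (B i)) (fun i ↦ (isCompact_tracialStatesOn (B i)).isClosed)
  rw [mem_iInter] at hτ
  obtain ⟨hball, hone, -⟩ := hτ (Classical.arbitrary ι)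
  refine ⟨WeakDual.toStrongDual τ, by simpa using hball, hone,
    isTracial_of_dense (WeakDual.toStrongDual τ).continuous hdense fun a ha b hb ↦ ?_⟩
  obtain ⟨i, hi⟩ := mem_iUnion.1 ha
  obtain ⟨j, hj⟩ := mem_iUnion.1 hb
  obtain ⟨k, hik, hjk⟩ := hdir i j
  exact (hτ k).2.2 a (hik hi) b (hjk hj)

end Directed

section MatrixTrace

open scoped Matrix.Norms.L2Operator

variable {m : Type*} [Fintype m] [DecidableEq m]

theorem norm_entry_le_l2_opNorm {𝕜 l : Type*} [RCLike 𝕜] [Fintype l] (a : Matrix l m 𝕜) (i : l)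
    (j : m) : ‖a i j‖ ≤ ‖a‖ := by
  calc ‖a i j‖ ≤ ‖WithLp.toLp 2 (a *ᵥ Pi.single j 1)‖ := by
        simpa using PiLp.norm_apply_le (WithLp.toLp 2 (a *ᵥ Pi.single j 1)) i
    _ ≤ ‖a‖ := by simpa using l2_opNorm_mulVec a (EuclideanSpace.single j 1)

theorem norm_trace_le_card_mul_l2_opNorm {𝕜 : Type*} [RCLike 𝕜] (a : Matrix m m 𝕜) :
    ‖a.trace‖ ≤ Fintype.card m * ‖a‖ := by
  calc ‖a.trace‖ ≤ ∑ i, ‖a i i‖ := norm_sum_le _ _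
    _ ≤ ∑ _i : m, ‖a‖ := Finset.sum_le_sum fun i _ ↦ norm_entry_le_l2_opNorm a i i
    _ = Fintype.card m * ‖a‖ := by simp

theorem exists_isTracialState_of_starAlgHom_matrix {B : Type*} [CStarAlgebra B] [Nonempty m]
    (e : B →⋆ₐ[ℂ] Matrix m m ℂ) : ∃ σ : StrongDual ℂ B, IsTracialState σ := by
  have hm : (0 : ℝ) < Fintype.card m := by exact_mod_cast Fintype.card_pos
  let σ : B →ₗ[ℂ] ℂ := (Fintype.card m : ℂ)⁻¹ • traceLinearMap m ℂ ℂ ∘ₗ e.toAlgHom.toLinearMap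
  have hσ (x : B) : ‖σ x‖ ≤ 1 * ‖x‖ := by
    calc ‖σ x‖ = (Fintype.card m : ℝ)⁻¹ * ‖(e x).trace‖ := by simp [σ]
      _ ≤ (Fintype.card m : ℝ)⁻¹ * (Fintype.card m * ‖e x‖) := by
        gcongr; exact norm_trace_le_card_mul_l2_opNorm _
      _ = ‖e x‖ := inv_mul_cancel_left₀ hm.ne' _
      _ ≤ 1 * ‖x‖ := (one_mul ‖x‖).symm ▸ NonUnitalStarAlgHom.norm_apply_le e x
  refine ⟨σ.mkContinuous 1 hσ, σ.mkContinuous_norm_le zero_le_one hσ, by simp [σ], fun a b ↦ ?_⟩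
  simpa [σ] using isTracial_trace.comp e a b

end MatrixTrace

end TracialState

section Projections

theorem isConj_of_isIdempotentElem_of_norm_lt_one {A : Type*} [NormedRing A]
    [HasSummableGeomSeries A] {p q : A} (hp : IsIdempotentElem p) (hq : IsIdempotentElem q)
    (h : ‖(2 * q - 1) * (p - q)‖ < 1) : IsConj p q := by
  -- The intertwiner `q p + (1 - q) (1 - p)` equals `1 + (2 q - 1) (p - q)`.
  obtain ⟨u, hu⟩ : IsUnit (1 + (2 * q - 1) * (p - q)) := by
    simpa using isUnit_one_sub_of_norm_lt_one ((norm_neg _).trans_lt h)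
  have hu' : (u : A) = q * p + (1 - q) * (1 - p) := by
    linear_combination (norm := noncomm_ring) hu - (2 : ℤ) • hq.eq
  refine ⟨u, ?_⟩
  rw [SemiconjBy, hu', add_mul, mul_add, mul_assoc, hp.eq, ← mul_assoc q q, hq.eq,
    mul_assoc (1 - q), hp.one_sub_mul_self, mul_zero, ← mul_assoc q, hq.mul_one_sub_self, zero_mul]

theorem isConj_of_isStarProjection_of_norm_sub_lt_one {A : Type*} [NormedRing A] [StarRing A]
    [CStarRing A] [HasSummableGeomSeries A] {p q : A} (hp : IsStarProjection p)
    (hq : IsStarProjection q) (h : ‖p - q‖ < 1) : IsConj p q := by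
  refine isConj_of_isIdempotentElem_of_norm_lt_one hp.isIdempotentElem hq.isIdempotentElem ?_
  rwa [CStarRing.norm_mem_unitary_mul _ hq.two_mul_sub_one_mem_unitary]

theorem abs_indicator_Ioi_half_sub_le (x : ℝ) :
    |indicator (Ioi (1 / 2)) 1 x - x| ≤ 2 * |x * x - x| := by
  rw [← mul_sub_one, abs_mul]
  rcases le_or_gt x (1 / 2) with hx | hx
  · have : 1 / 2 ≤ |x - 1| := by rw [abs_of_nonpos (by linarith)]; linarith
    simp only [indicator_of_notMem (notMem_Ioi.2 hx), zero_sub, abs_neg]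
    nlinarith [abs_nonneg x]
  · have : 1 / 2 ≤ |x| := hx.le.trans (le_abs_self x)
    simp only [indicator_of_mem (mem_Ioi.2 hx), Pi.one_apply, abs_sub_comm 1 x]
    nlinarith [abs_nonneg (x - 1)]

theorem norm_mul_self_sub_self_le {A : Type*} [NonUnitalNormedRing A] [StarRing A] [CStarRing A]
    {p : A} (hp : IsStarProjection p) (b : A) :
    ‖b * b - b‖ ≤ ‖b - p‖ * (‖b - p‖ + 3) := by
  have hp1 : ‖p‖ ≤ 1 := hp.norm_le
  calc ‖b * b - b‖ = ‖(b - p) * (b - p) + p * (b - p) + (b - p) * p - (b - p)‖ := by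
        congr 1
        linear_combination (norm := noncomm_ring) hp.isIdempotentElem.eq
    _ ≤ ‖b - p‖ * ‖b - p‖ + ‖p‖ * ‖b - p‖ + ‖b - p‖ * ‖p‖ + ‖b - p‖ := by
        refine (norm_sub_le _ _).trans ?_
        gcongr
        refine (norm_add₃_le).trans ?_
        gcongr <;> exact norm_mul_le _ _
    _ ≤ ‖b - p‖ * (‖b - p‖ + 3) := by nlinarith [norm_nonneg (b - p)]

theorem norm_realPart_sub_le {A : Type*} [NormedAddCommGroup A] [StarAddMonoid A]
    [NormedStarGroup A] [NormedSpace ℂ A] [StarModule ℂ A] {p : A} (hp : IsSelfAdjoint p) (a : A) :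
    ‖(realPart a : A) - p‖ ≤ ‖a - p‖ := by
  have h : (realPart a : A) - p = realPart (a - p) := by simp [hp.coe_realPart]
  exact h ▸ realPart.norm_le (a - p)

section CStarAlgebra

variable {A : Type*} [CStarAlgebra A]

theorem exists_isStarProjection_norm_sub_le {b : A} (hb : IsSelfAdjoint b)
    (h : ‖b * b - b‖ < 1 / 4) : ∃ q, IsStarProjection q ∧ ‖q - b‖ ≤ 2 * ‖b * b - b‖ := by
  have hspec (x) (hx : x ∈ spectrum ℝ b) : |x * x - x| ≤ ‖b * b - b‖ := by
    have hcfc : cfc (fun x : ℝ ↦ x * x - x) b = b * b - b := by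
      rw [cfc_sub _ _, cfc_mul _ _, cfc_id' ℝ b]
    exact hcfc ▸ norm_apply_le_norm_cfc (fun x : ℝ ↦ x * x - x) b hx
  let χ : ℝ → ℝ := indicator (Ioi (1 / 2)) 1
  have hχ : ContinuousOn χ (spectrum ℝ b) := by
    classical
    refine ContinuousOn.piecewise (fun x hx ↦ ?_) continuousOn_const continuousOn_const
    obtain rfl : x = 1 / 2 := by simpa using hx.2
    exact absurd ((hspec _ hx.1).trans_lt h) (by norm_num)
  refine ⟨cfc χ b, ⟨?_, cfc_predicate χ b⟩, ?_⟩
  · rw [IsIdempotentElem, ← cfc_mul χ χ b hχ hχ]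
    congr 1
    ext x
    by_cases hx : x ∈ Ioi (1 / 2) <;> simp only [χ, indicator, hx, if_true, if_false] <;> simp
  · calc ‖cfc χ b - b‖ = ‖cfc (fun x ↦ χ x - x) b‖ := by rw [cfc_sub χ _ b hχ, cfc_id' ℝ b]
      _ ≤ 2 * ‖b * b - b‖ := norm_cfc_le (by positivity) fun x hx ↦
        (abs_indicator_Ioi_half_sub_le x).trans (by gcongr; exact hspec x hx)

theorem exists_isStarProjection_isConj_of_norm_sub_le {p : A} (hp : IsStarProjection p)
    {B : StarSubalgebra ℂ A} (hB : IsClosed (B : Set A)) {a : A} (ha : a ∈ B)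
    (hap : ‖a - p‖ ≤ 1 / 16) : ∃ q : B, IsStarProjection q ∧ IsConj p q := by
  let b : B := realPart (⟨a, ha⟩ : B)
  have hbp : ‖(b : A) - p‖ ≤ 1 / 16 := (norm_realPart_sub_le hp.isSelfAdjoint a).trans hap
  have hbb : ‖b * b - b‖ ≤ 49 / 256 :=
    (norm_mul_self_sub_self_le hp (b : A)).trans (by nlinarith [norm_nonneg ((b : A) - p)])
  obtain ⟨q, hq, hqb⟩ := exists_isStarProjection_norm_sub_le
    (realPart (⟨a, ha⟩ : B)).2 (hbb.trans_lt (by norm_num))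
  refine ⟨q, hq, isConj_of_isStarProjection_of_norm_sub_lt_one hp (hq.map B.subtype) ?_⟩
  calc ‖p - q‖ ≤ ‖(q : A) - b‖ + ‖(b : A) - p‖ := by
        rw [norm_sub_rev]; exact norm_sub_le_norm_sub_add_norm_sub _ _ _
    _ < 1 := by linarith [show ‖(q : A) - b‖ ≤ 2 * ‖b * b - b‖ from hqb]

end CStarAlgebra

end Projections

section Amplification

variable {m o n R : Type*} [Fintype m] [DecidableEq m] [Fintype o] [DecidableEq o] [Fintype n]
  [DecidableEq n] [CommSemiring R] [StarRing R]

/-- The amplification `a ↦ a ⊗ 1` of matrices, along an identification `e` of the index set of the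
target with `m × o`. -/
def amplification (e : m × o ≃ n) : Matrix m m R →⋆ₐ[R] Matrix n n R where
  toFun a := reindexAlgEquiv R R e (a ⊗ₖ (1 : Matrix o o R))
  map_one' := by rw [one_kronecker_one, map_one]
  map_mul' a b := by rw [← map_mul, ← mul_kronecker_mul, one_mul]
  map_zero' := by rw [zero_kronecker, map_zero]
  map_add' a b := by rw [add_kronecker, map_add]
  commutes' c := by
    simp only [Algebra.algebraMap_eq_smul_one, smul_kronecker, one_kronecker_one, map_smul, map_one]
  map_star' a := by
    simp [star_eq_conjTranspose, conjTranspose_kronecker, conjTranspose_submatrix]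

theorem amplification_injective [Nonempty o] (e : m × o ≃ n) :
    Function.Injective (amplification (R := R) e) := fun a b hab ↦ by
  ext i j
  let k : o := Classical.arbitrary o
  simpa using congrFun (congrFun ((reindexAlgEquiv R R e).injective hab) (i, k)) (j, k)

theorem exists_injective_starAlgHom_matrix_of_dvd {N M : ℕ} (h : N ∣ M) (hM : 0 < M) :
    ∃ ψ : Matrix (Fin N) (Fin N) R →⋆ₐ[R] Matrix (Fin M) (Fin M) R, Function.Injective ψ := by
  obtain ⟨d, rfl⟩ := h
  have : NeZero d := ⟨(Nat.pos_of_mul_pos_left hM).ne'⟩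
  exact ⟨amplification finProdFinEquiv, amplification_injective _⟩

end Amplification

section MatricialFamily

variable {A : Type*} [CStarAlgebra A]

theorem isClosed_of_starAlgEquiv_matrix {m : Type*} [Fintype m] {B : StarSubalgebra ℂ A}
    (e : B ≃⋆ₐ[ℂ] Matrix m m ℂ) : IsClosed (B : Set A) := by
  classical
  have : FiniteDimensional ℂ (Subalgebra.toSubmodule B.toSubalgebra) :=
    LinearEquiv.finiteDimensional (e.symm.toAlgEquiv.toLinearEquiv : _ ≃ₗ[ℂ] B)
  exact Submodule.closed_of_finiteDimensional (Subalgebra.toSubmodule B.toSubalgebra)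

theorem isStarProjection_single_one {m R : Type*} [Fintype m] [DecidableEq m] [CommSemiring R]
    [StarRing R] (i : m) : IsStarProjection (single i i (1 : R)) :=
  ⟨by simp [IsIdempotentElem], by simp [IsSelfAdjoint, star_eq_conjTranspose]⟩

variable {ι : Type*} {n : ι → ℕ} {B : ι → StarSubalgebra ℂ A}

theorem exists_isTracialState_of_matricial (hpos : ∀ i, 0 < n i) (hdir : Directed (· ≤ ·) B)
    (e : ∀ i, B i ≃⋆ₐ[ℂ] Matrix (Fin (n i)) (Fin (n i)) ℂ) (hdense : Dense (⋃ i, (B i : Set A))) :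
    ∃ τ : StrongDual ℂ A, IsTracialState τ := by
  have : Nonempty ι := (nonempty_iUnion.1 hdense.nonempty).nonempty
  refine exists_isTracialState_of_directed (B := fun i ↦ (B i).toSubalgebra) hdir hdense fun i ↦ ?_
  have := isClosed_of_starAlgEquiv_matrix (e i)
  have : NeZero (n i) := ⟨(hpos i).ne'⟩
  exact exists_isTracialState_of_starAlgHom_matrix (B := B i)
    (e i : B i →⋆ₐ[ℂ] Matrix (Fin (n i)) (Fin (n i)) ℂ)

theorem exists_isStarProjection_isConj_of_dense (hB : ∀ i, IsClosed (B i : Set A))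
    (hdense : Dense (⋃ i, (B i : Set A))) {p : A} (hp : IsStarProjection p) :
    ∃ i, ∃ q : B i, IsStarProjection q ∧ IsConj p q := by
  obtain ⟨a, ha, hpa⟩ := hdense.exists_dist_lt p (ε := 1 / 16) (by norm_num)
  obtain ⟨i, hi⟩ := mem_iUnion.1 ha
  exact ⟨i, exists_isStarProjection_isConj_of_norm_sub_le hp (hB i) hi
    (by rw [← dist_eq_norm, dist_comm]; exact hpa.le)⟩

theorem exists_dvd_of_starAlgHom_matrix (hpos : ∀ i, 0 < n i) (hdir : Directed (· ≤ ·) B)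
    (e : ∀ i, B i ≃⋆ₐ[ℂ] Matrix (Fin (n i)) (Fin (n i)) ℂ) (hdense : Dense (⋃ i, (B i : Set A)))
    {N : ℕ} (φ : Matrix (Fin N) (Fin N) ℂ →⋆ₐ[ℂ] A) : ∃ i, N ∣ n i := by
  obtain ⟨τ, -, hτ1, hτ⟩ := exists_isTracialState_of_matricial hpos hdir e hdense
  have : Nontrivial A := ⟨1, 0, fun h ↦ by simp [h] at hτ1⟩
  have : Nontrivial (Matrix (Fin N) (Fin N) ℂ) := φ.toAlgHom.toRingHom.domain_nontrivial
  obtain ⟨j⟩ : Nonempty (Fin N) := not_isEmpty_iff.1 fun _ ↦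
    not_subsingleton (Matrix (Fin N) (Fin N) ℂ) inferInstance
  obtain ⟨i, q, hq, hpq⟩ := exists_isStarProjection_isConj_of_dense
    (fun i ↦ isClosed_of_starAlgEquiv_matrix (e i)) hdense ((isStarProjection_single_one j).map φ)
  have hτp : N * τ (φ (single j j 1)) = 1 := by
    have htr : IsTracial (τ.toLinearMap ∘ₗ φ.toAlgHom.toLinearMap) := hτ.comp φ
    simpa [hτ1] using htr.card_nsmul_apply_single_self j 1
  obtain ⟨r, hr⟩ : ∃ r : ℕ, n i * τ q = r := by
    let ψ : Matrix (Fin (n i)) (Fin (n i)) ℂ →⋆ₐ[ℂ] A := (B i).subtype.comp (e i).symm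
    have htr : IsTracial (τ.toLinearMap ∘ₗ ψ.toAlgHom.toLinearMap) := hτ.comp ψ
    simpa [ψ] using htr.exists_card_nsmul_apply_eq_natCast (by simpa using hτ1)
      (hq.isIdempotentElem.map (e i))
  refine ⟨i, r, ?_⟩
  have h : (n i : ℂ) = N * r := by
    rw [← hr, ← hτ.eq_of_isConj hpq, mul_left_comm, hτp, mul_one]
  exact_mod_cast h

theorem uhf_supernatural_number_well_defined_general (hpos : ∀ i, 0 < n i)
    (hdir : Directed (· ≤ ·) B)
    (hiso : ∀ i, Nonempty (B i ≃⋆ₐ[ℂ] Matrix (Fin (n i)) (Fin (n i)) ℂ))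
    (hdense : Dense (⋃ i, (B i : Set A))) (N : ℕ) :
    (∃ φ : Matrix (Fin N) (Fin N) ℂ →⋆ₐ[ℂ] A, Function.Injective φ) ↔ ∃ i, N ∣ n i := by
  constructor
  · rintro ⟨φ, -⟩
    exact exists_dvd_of_starAlgHom_matrix hpos hdir (fun i ↦ (hiso i).some) hdense φ
  · rintro ⟨i, hi⟩
    obtain ⟨e⟩ := hiso i
    obtain ⟨ψ, hψ⟩ := exists_injective_starAlgHom_matrix_of_dvd (R := ℂ) hi (hpos i)
    refine ⟨(B i).subtype.comp ((e.symm : _ →⋆ₐ[ℂ] B i).comp ψ), ?_⟩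
    exact Subtype.val_injective.comp (e.symm.injective.comp hψ)

end MatricialFamily

/-- For a unital C*-algebra `A` with a matricial chain `(n k, Ak k)` and a prime
`p`: `M_{p^m}(ℂ)` unitally *-embeds into `A` iff `p^m ∣ n k` for some `k`; consequently the
supernatural number exponent `ε_A(p)` (a supremum in `ℕ∞`) is chain-independent, being equal to
the supremum of those `m` for which `M_{p^m}(ℂ)` embeds into `A`. -/
theorem uhf_supernatural_number_well_defined
    {A : Type*} [CStarAlgebra A]
    (n : ℕ → ℕ) (Ak : ℕ → StarSubalgebra ℂ A)
    (hpos : ∀ k, 0 < n k)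
    (hmono : ∀ k, Ak k ≤ Ak (k + 1))
    (hiso : ∀ k, Nonempty ((Ak k) ≃⋆ₐ[ℂ] Matrix (Fin (n k)) (Fin (n k)) ℂ))
    (hdense : Dense (⋃ k, (Ak k : Set A)))
    (p : ℕ) (hp : p.Prime) :
    (∀ m : ℕ,
      (∃ φ : Matrix (Fin (p ^ m)) (Fin (p ^ m)) ℂ →⋆ₐ[ℂ] A, Function.Injective φ) ↔
        (∃ k, p ^ m ∣ n k)) ∧
    (⨆ m ∈ {m : ℕ | ∃ k, p ^ m ∣ n k}, (m : ℕ∞)) =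
      ⨆ m ∈ {m : ℕ |
        ∃ φ : Matrix (Fin (p ^ m)) (Fin (p ^ m)) ℂ →⋆ₐ[ℂ] A, Function.Injective φ}, (m : ℕ∞) := by
  have hmem := uhf_supernatural_number_well_defined_general hpos
    (monotone_nat_of_le_succ hmono).directed_le hiso hdense
  exact ⟨fun m ↦ hmem (p ^ m), by simp only [hmem]⟩
end

section
/- Let A be a unital C*-algebra over ℂ admitting a matricial chain. Suppose M is a *-subalgebra of A that is *-isomorphic (as a ℂ-star-algebra) to a full matrix algebra M_d(ℂ) for some d ≥ 1, and let v_1, …, v_k ∈ A and ε > 0. Then there exist n ≥ 1 and a closed unital *-subalgebra B of A (with 1_A ∈ B) such that M ⊆ B, B is *-isomorphic to M_n(ℂ), and the distance (Metric.infDist) from each v_i to B is less than ε. -/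
/-!
Let `e i j` be the matrix units of `M`. Approximate `e o o` by projections `p` and the column
`e i o` by elements `y i = y i * p` of the chain, and normalise the row `y` to a row `v` with
`∑ i, v i * star (v i) = 1`. Then the Gram matrix `(star (v i) * v j)` is a projection below
`diag(p, …, p)`; their difference is an idempotent of small norm, hence zero, so the elements
`v i * star (v j)` are exact matrix units in the chain. The operator `∑ i, v i * e o i` is close
to `1` and intertwines the two systems, so its unitary part `u` conjugates `M` into a member `S k`
of the chain. Since `u` is close to `1`, `star u * S k * u` contains `M` and still approximates the
given elements.
-/

open Filter Topology
open scoped Matrix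

section Approximation

/-- A family of subsets `S k` approximates a space along a filter `l` if every point is the limit
along `l` of a choice of points `x k ∈ S k`. -/
def IsApproximating {X κ : Type*} [TopologicalSpace X] (l : Filter κ) (S : κ → Set X) : Prop :=
  ∀ a, ∃ x : κ → X, (∀ k, x k ∈ S k) ∧ Tendsto x l (𝓝 a)

lemma exists_mem_dist_le_two_mul_infDist {X : Type*} [PseudoMetricSpace X] {s : Set X}
    (hs : IsClosed s) (hne : s.Nonempty) (a : X) : ∃ x ∈ s, dist a x ≤ 2 * Metric.infDist a s := by
  by_cases ha : a ∈ s
  · exact ⟨a, ha, by simp [Metric.infDist_zero_of_mem ha]⟩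
  · have hpos := (hs.notMem_iff_infDist_pos hne).1 ha
    obtain ⟨x, hx, hlt⟩ := (Metric.infDist_lt_iff hne).1 (lt_two_mul_self hpos)
    exact ⟨x, hx, hlt.le⟩

lemma isApproximating_atTop_of_dense_iUnion {X κ : Type*} [PseudoMetricSpace X] [Preorder κ]
    {S : κ → Set X} (hclosed : ∀ k, IsClosed (S k)) (hne : ∀ k, (S k).Nonempty)
    (hmono : Monotone S) (hdense : Dense (⋃ k, S k)) : IsApproximating atTop S := by
  intro a
  choose x hxS hx using fun k => exists_mem_dist_le_two_mul_infDist (hclosed k) (hne k) a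
  refine ⟨x, hxS, Metric.tendsto_nhds.2 fun ε hε => ?_⟩
  obtain ⟨y, hy, hya⟩ := hdense.exists_dist_lt a (half_pos hε)
  obtain ⟨N, hN⟩ := Set.mem_iUnion.1 hy
  filter_upwards [eventually_ge_atTop N] with k hk
  have hinf : Metric.infDist a (S k) ≤ dist a y := Metric.infDist_le_dist_of_mem (hmono hk hN)
  rw [dist_comm]
  linarith [hx k]

end Approximation

section SpectralRounding

variable {A : Type*} [CStarAlgebra A]

/-- The spectral projection of a self-adjoint element for the interval `(1/2, ∞)`. It is only
meaningful when `1/2` is not in the spectrum; otherwise `cfc` may return the junk value `0`, which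
is again a projection. -/
noncomputable def roundToProjection (a : A) : A :=
  cfc (Set.indicator (Set.Ioi (1 / 2 : ℝ)) 1) a

lemma isStarProjection_roundToProjection (a : A) : IsStarProjection (roundToProjection a) := by
  refine ⟨?_, cfc_predicate _ a⟩
  rw [IsIdempotentElem, roundToProjection]
  by_cases hc : ContinuousOn (Set.indicator (Set.Ioi (1 / 2 : ℝ)) (1 : ℝ → ℝ)) (spectrum ℝ a)
  · rw [← cfc_mul _ _ a hc hc]
    congr 1 with x
    by_cases hx : x ∈ Set.Ioi (1 / 2 : ℝ) <;> simp only [hx, Set.indicator_of_mem,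
      Set.indicator_of_notMem, not_false_eq_true, Pi.one_apply, mul_one, mul_zero]
  · rw [cfc_apply_of_not_continuousOn a hc, mul_zero]

lemma isUnit_half_sub_of_isStarProjection {e : A} (he : IsStarProjection e) :
    IsUnit (algebraMap ℝ A (1 / 2) - e) := by
  rw [← spectrum.notMem_iff]
  intro h
  have := (isStarProjection_iff_spectrum_subset_and_isSelfAdjoint.1 he).1 h
  norm_num at this

lemma roundToProjection_of_isStarProjection {e : A} (he : IsStarProjection e) :
    roundToProjection e = e := by
  obtain ⟨hspec, hsa⟩ := isStarProjection_iff_spectrum_subset_and_isSelfAdjoint.1 he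
  rw [roundToProjection]
  conv_rhs => rw [← cfc_id' ℝ e]
  refine cfc_congr fun x hx => ?_
  rcases hspec hx with rfl | rfl <;> norm_num [Set.indicator]

lemma continuousOn_roundToProjection :
    ContinuousOn (roundToProjection : A → A)
      {a | IsSelfAdjoint a ∧ IsUnit (algebraMap ℝ A (1 / 2) - a)} := by
  have hspec : {1 / 2}ᶜ ∈ nhdsSet (⋃ a ∈ {a : A | IsSelfAdjoint a ∧
      IsUnit (algebraMap ℝ A (1 / 2) - a)}, spectrum ℝ a) := by
    refine isOpen_compl_singleton.mem_nhdsSet.2 (Set.iUnion₂_subset fun a ha x hx hx' => ?_)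
    exact spectrum.notMem_iff.2 ha.2 (Set.mem_singleton_iff.1 hx' ▸ hx)
  refine ContinuousOn.cfc_of_mem_nhdsSet _ hspec continuousOn_id (fun a ha => ha.1) ?_
  refine continuousOn_of_forall_continuousAt fun x hx =>
    continuousOn_const.continuousAt_indicator ?_
  rwa [frontier_Ioi]

lemma tendsto_realPart {κ : Type*} {l : Filter κ} {x : κ → A} {a : A} (ha : IsSelfAdjoint a)
    (hx : Tendsto x l (𝓝 a)) : Tendsto (fun k => (realPart (x k) : A)) l (𝓝 a) := by
  have h := (hx.add hx.star).const_smul (2⁻¹ : ℝ)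
  rwa [ha.star_eq, ← two_smul ℝ a, inv_smul_smul₀ two_ne_zero] at h

lemma IsApproximating.exists_isStarProjection_tendsto {κ : Type*} {l : Filter κ}
    {S : κ → StarSubalgebra ℂ A} (hclosed : ∀ k, IsClosed (S k : Set A))
    (happrox : IsApproximating l fun k => (S k : Set A)) {e : A} (he : IsStarProjection e) :
    ∃ p : κ → A, (∀ k, p k ∈ S k) ∧ (∀ k, IsStarProjection (p k)) ∧ Tendsto p l (𝓝 e) := by
  obtain ⟨x, hxS, hx⟩ := happrox e
  have hre : Tendsto (fun k => (realPart (x k) : A)) l (𝓝 e) := tendsto_realPart he.isSelfAdjoint hx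
  have hreS : ∀ k, (realPart (x k) : A) ∈ S k := fun k => by
    rw [realPart_apply_coe, RCLike.real_smul_eq_coe_smul (K := ℂ)]
    exact (S k).smul_mem (add_mem (hxS k) (star_mem (hxS k))) _
  refine ⟨fun k => roundToProjection (realPart (x k) : A),
    fun k => cfc_mem (𝕜' := ℂ) (hs := hclosed k) _ (hreS k),
    fun k => isStarProjection_roundToProjection _, ?_⟩
  have hunit : ∀ᶠ k in l, IsUnit (algebraMap ℝ A (1 / 2) - realPart (x k)) :=
    (tendsto_const_nhds.sub hre).eventually
      (Units.isOpen.mem_nhds (isUnit_half_sub_of_isStarProjection he))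
  have hcont := continuousOn_roundToProjection e
    ⟨he.isSelfAdjoint, isUnit_half_sub_of_isStarProjection he⟩
  rw [ContinuousWithinAt, roundToProjection_of_isStarProjection he] at hcont
  exact hcont.comp (tendsto_nhdsWithin_iff.2
    ⟨hre, hunit.mono fun k hk => ⟨(realPart (x k)).2, hk⟩⟩)

end SpectralRounding

section InverseSqrt

variable {A : Type*} [CStarAlgebra A]

attribute [local instance] CStarAlgebra.spectralOrder CStarAlgebra.spectralOrderedRing

lemma rpow_mem_starSubalgebra {S : StarSubalgebra ℂ A} (hS : IsClosed (S : Set A)) {z : A}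
    (hz : z ∈ S) (r : ℝ) : z ^ r ∈ S := by
  by_cases h : 0 ≤ z
  · rw [CFC.rpow_eq_cfc_real]
    exact cfc_mem (𝕜' := ℂ) (hs := hS) _ hz
  · rw [CFC.rpow_def, cfc_apply_of_not_predicate z h]
    exact zero_mem S

lemma star_rpow (z : A) (r : ℝ) : star (z ^ r) = z ^ r :=
  (IsSelfAdjoint.of_nonneg (CFC.rpow_nonneg (a := z) (y := r))).star_eq

lemma tendsto_rpow_one {κ : Type*} {l : Filter κ} {z : κ → A} (hz : ∀ k, 0 ≤ z k)
    (h : Tendsto z l (𝓝 1)) (r : ℝ) : Tendsto (fun k => z k ^ r) l (𝓝 1) := by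
  have hcont := CFC.continuousOn_rpow (A := A) r 1 isStrictlyPositive_one
  rw [ContinuousWithinAt, CFC.one_rpow] at hcont
  refine hcont.comp (tendsto_nhdsWithin_iff.2 ⟨h, ?_⟩)
  filter_upwards [h.eventually (Units.isOpen.mem_nhds isUnit_one)] with k hk
  exact hk.isStrictlyPositive (hz k)

lemma commute_rpow {z b : A} (h : Commute z b) (r : ℝ) : Commute (z ^ r) b :=
  h.cfc_nnreal _

variable {ι : Type*} [Fintype ι]

/-- The row `y` rescaled by the inverse square root of `∑ i, y i * star (y i)`; when that sum is
invertible, the rescaled row `v` satisfies `∑ i, v i * star (v i) = 1`. -/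
noncomputable def normalizeRow (y : ι → A) : ι → A :=
  (y ⬝ᵥ star y) ^ (-(1 / 2) : ℝ) • y

lemma normalizeRow_dotProduct_star {y : ι → A} (hy : IsUnit (y ⬝ᵥ star y)) :
    normalizeRow y ⬝ᵥ star (normalizeRow y) = 1 := by
  have hpos : IsStrictlyPositive (y ⬝ᵥ star y) :=
    hy.isStrictlyPositive (dotProduct_self_star_nonneg y)
  rw [← CFC.conjugate_rpow_neg_one_half (y ⬝ᵥ star y)]
  simp only [normalizeRow, dotProduct, Pi.star_apply, Pi.smul_apply, smul_eq_mul, star_mul,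
    star_rpow, Finset.mul_sum, Finset.sum_mul, mul_assoc]

lemma normalizeRow_mem {S : StarSubalgebra ℂ A} (hS : IsClosed (S : Set A)) {y : ι → A}
    (hy : ∀ i, y i ∈ S) (i : ι) : normalizeRow y i ∈ S :=
  mul_mem (rpow_mem_starSubalgebra hS (sum_mem fun j _ => mul_mem (hy j) (star_mem (hy j))) _)
    (hy i)

section Limits

variable {κ : Type*} {l : Filter κ} {y : κ → ι → A} {w : ι → A}

lemma tendsto_dotProduct_star (hy : Tendsto y l (𝓝 w)) :
    Tendsto (fun k => y k ⬝ᵥ star (y k)) l (𝓝 (w ⬝ᵥ star w)) :=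
  tendsto_finsetSum _ fun i _ => (hy.apply_nhds i).mul (hy.apply_nhds i).star

lemma tendsto_normalizeRow (hy : Tendsto y l (𝓝 w)) (hw : w ⬝ᵥ star w = 1) :
    Tendsto (fun k => normalizeRow (y k)) l (𝓝 w) := by
  have hnorm := tendsto_rpow_one (fun k => dotProduct_self_star_nonneg (y k))
    (hw ▸ tendsto_dotProduct_star hy) (-(1 / 2))
  simpa only [normalizeRow, one_smul] using hnorm.smul hy

lemma eventually_normalizeRow_dotProduct_star (hy : Tendsto y l (𝓝 w)) (hw : w ⬝ᵥ star w = 1) :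
    ∀ᶠ k in l, normalizeRow (y k) ⬝ᵥ star (normalizeRow (y k)) = 1 :=
  ((tendsto_dotProduct_star hy).eventually
    (Units.isOpen.mem_nhds (hw ▸ isUnit_one))).mono fun _ => normalizeRow_dotProduct_star

end Limits

/-- The unitary part `(a a*)^(-1/2) a` of the polar decomposition of an invertible element. -/
noncomputable def polarUnitary (a : A) : A := (a * star a) ^ (-(1 / 2) : ℝ) * a

lemma polarUnitary_mem_unitary {a : A} (ha : IsUnit a) : polarUnitary a ∈ unitary A := by
  have hpos : IsStrictlyPositive (a * star a) :=
    (ha.mul ha.star).isStrictlyPositive (mul_star_self_nonneg a)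
  have hunit : IsUnit (polarUnitary a) :=
    ((CFC.isUnit_rpow_iff (a * star a) _ (by norm_num)).2 hpos.isUnit).mul ha
  have hright : polarUnitary a * star (polarUnitary a) = 1 := by
    rw [← CFC.conjugate_rpow_neg_one_half (a * star a)]
    simp only [polarUnitary, star_mul, star_rpow, mul_assoc]
  exact ⟨hunit.mul_left_cancel (by rw [← mul_assoc, hright, one_mul, mul_one]), hright⟩

lemma polarUnitary_mul_eq {a b c : A} (h : a * b = c * a) (hstar : a * star b = star c * a) :
    polarUnitary a * b = c * polarUnitary a := by
  have hcomm : Commute (a * star a) c := by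
    have : star a * c = b * star a := by simpa using (congrArg star hstar).symm
    rw [Commute, SemiconjBy, mul_assoc, this, ← mul_assoc, h, mul_assoc]
  rw [polarUnitary, mul_assoc, h, ← mul_assoc, (commute_rpow hcomm _).eq, mul_assoc]

lemma tendsto_polarUnitary {κ : Type*} {l : Filter κ} {a : κ → A} (ha : Tendsto a l (𝓝 1)) :
    Tendsto (fun k => polarUnitary (a k)) l (𝓝 1) := by
  have hprod : Tendsto (fun k => a k * star (a k)) l (𝓝 1) := by
    simpa using ha.mul ha.star
  simpa only [polarUnitary, mul_one] using
    (tendsto_rpow_one (fun k => mul_star_self_nonneg (a k)) hprod _).mul ha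

end InverseSqrt

section GramMatrix

open Matrix

lemma eq_zero_of_isIdempotentElem_of_norm_lt_one {R : Type*} [NonUnitalNormedRing R] {r : R}
    (hr : IsIdempotentElem r) (hlt : ‖r‖ < 1) : r = 0 := by
  have hle : ‖r‖ ≤ ‖r‖ * ‖r‖ := by
    simpa only [hr.eq] using norm_mul_le r r
  exact norm_le_zero_iff.1 (by nlinarith [norm_nonneg r])

variable {ι : Type*} [Fintype ι]

lemma eventually_eq_zero_of_isIdempotentElem {R κ : Type*} [NormedRing R] {l : Filter κ}
    {r : κ → Matrix ι ι R} (hr : ∀ᶠ k in l, IsIdempotentElem (r k)) (hr0 : Tendsto r l (𝓝 0)) :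
    ∀ᶠ k in l, r k = 0 := by
  classical
  let _ : NormedRing (Matrix ι ι R) := Matrix.linftyOpNormedRing
  have hnorm : Tendsto (fun k => ‖r k‖) l (𝓝 0) := tendsto_zero_iff_norm_tendsto_zero.1 hr0
  filter_upwards [hr, hnorm.eventually_lt_const one_pos] with k hk hlt
  exact eq_zero_of_isIdempotentElem_of_norm_lt_one hk hlt

variable {R : Type*}

lemma isStarProjection_diagonal [DecidableEq ι] [NonUnitalSemiring R] [StarRing R] {p : R}
    (hp : IsStarProjection p) : IsStarProjection (diagonal fun _ : ι => p) where
  isIdempotentElem := by rw [IsIdempotentElem, diagonal_mul_diagonal, hp.isIdempotentElem.eq]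
  isSelfAdjoint := by
    rw [IsSelfAdjoint, star_eq_conjTranspose, diagonal_conjTranspose]
    exact congrArg diagonal (funext fun _ => hp.isSelfAdjoint)

lemma isStarProjection_vecMulVec_star [Semiring R] [StarRing R] {v : ι → R}
    (hv : v ⬝ᵥ star v = 1) : IsStarProjection (vecMulVec (star v) v) where
  isIdempotentElem := by rw [IsIdempotentElem, vecMulVec_mul_vecMulVec, hv, one_smul]
  isSelfAdjoint := by
    rw [IsSelfAdjoint, star_eq_conjTranspose, conjTranspose_vecMulVec, star_star]

lemma isStarProjection_diagonal_sub_vecMulVec_star [DecidableEq ι] [Ring R] [StarRing R] {p : R}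
    (hp : IsStarProjection p) {v : ι → R} (hv : v ⬝ᵥ star v = 1) (hvp : ∀ i, v i * p = v i) :
    IsStarProjection (diagonal (fun _ => p) - vecMulVec (star v) v) := by
  refine (isStarProjection_vecMulVec_star hv).sub_of_mul_eq_left (isStarProjection_diagonal hp) ?_
  ext i j
  rw [mul_diagonal, vecMulVec_apply, mul_assoc, hvp]

/-- The defining relations of a column `v i = e i o` in a system of matrix units with
`p = e o o`, without requiring completeness `∑ i, v i * star (v i) = 1`. -/
structure IsMatrixUnitColumn {ι R : Type*} [DecidableEq ι] [Mul R] [Zero R] [Star R] (p : R)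
    (v : ι → R) : Prop where
  mul_eq : ∀ i, v i * p = v i
  star_mul_eq : ∀ i j, star (v i) * v j = if i = j then p else 0

lemma vecMulVec_star_eq_diagonal_iff {ι R : Type*} [DecidableEq ι] [NonUnitalNonAssocSemiring R]
    [Star R] {p : R} {v : ι → R} : vecMulVec (star v) v = diagonal (fun _ => p) ↔
      ∀ i j, star (v i) * v j = if i = j then p else 0 :=
  Matrix.ext_iff.symm

lemma eventually_isMatrixUnitColumn {ι R κ : Type*} [Fintype ι] [DecidableEq ι] [NormedRing R]
    [StarRing R] [ContinuousStar R] {l : Filter κ} {p : κ → R} {q : R} {v : κ → ι → R} {w : ι → R}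
    (hproj : ∀ k, IsStarProjection (p k)) (hvp : ∀ k i, v k i * p k = v k i)
    (hnormalized : ∀ᶠ k in l, v k ⬝ᵥ star (v k) = 1) (hp : Tendsto p l (𝓝 q))
    (hv : Tendsto v l (𝓝 w)) (hw : IsMatrixUnitColumn q w) :
    ∀ᶠ k in l, IsMatrixUnitColumn (p k) (v k) := by
  let defect (p : R) (v : ι → R) : Matrix ι ι R := diagonal (fun _ => p) - vecMulVec (star v) v
  have hcont : Continuous fun x : R × (ι → R) => defect x.1 x.2 :=
    (continuous_pi fun _ => continuous_fst).matrix_diagonal.sub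
      (continuous_snd.star.matrix_vecMulVec continuous_snd)
  have hlimit : defect q w = 0 :=
    sub_eq_zero.2 (vecMulVec_star_eq_diagonal_iff.2 hw.star_mul_eq).symm
  have hdefect : Tendsto (fun k => defect (p k) (v k)) l (𝓝 0) :=
    hlimit ▸ (hcont.tendsto (q, w)).comp (hp.prodMk_nhds hv)
  have hidem : ∀ᶠ k in l, IsIdempotentElem (defect (p k) (v k)) := hnormalized.mono fun k hk =>
    (isStarProjection_diagonal_sub_vecMulVec_star (hproj k) hk (hvp k)).isIdempotentElem
  filter_upwards [eventually_eq_zero_of_isIdempotentElem hidem hdefect] with k hk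
  exact ⟨hvp k, vecMulVec_star_eq_diagonal_iff.1 (sub_eq_zero.1 hk).symm⟩

end GramMatrix

section MatrixUnits

/-- A complete system of matrix units `e i j` in a star-ring. -/
structure IsMatrixUnitSystem {ι R : Type*} [Fintype ι] [DecidableEq ι] [NonAssocSemiring R]
    [Star R] (e : ι → ι → R) : Prop where
  mul_eq : ∀ i j k l, e i j * e k l = if j = k then e i l else 0
  star_eq : ∀ i j, star (e i j) = e j i
  sum_eq_one : ∑ i, e i i = 1

variable {ι : Type*} [Fintype ι] [DecidableEq ι]

namespace IsMatrixUnitSystem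

section Algebraic

variable {R : Type*} [Semiring R]

section Star

variable [Star R] {e : ι → ι → R}

lemma isStarProjection (he : IsMatrixUnitSystem e) (i : ι) : IsStarProjection (e i i) where
  isIdempotentElem := by rw [IsIdempotentElem, he.mul_eq, if_pos rfl]
  isSelfAdjoint := he.star_eq i i

lemma isMatrixUnitColumn (he : IsMatrixUnitSystem e) (o : ι) :
    IsMatrixUnitColumn (e o o) fun i => e i o where
  mul_eq i := by rw [he.mul_eq, if_pos rfl]
  star_mul_eq i j := by rw [he.star_eq, he.mul_eq]

lemma column_dotProduct_star (he : IsMatrixUnitSystem e) (o : ι) :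
    (fun i => e i o) ⬝ᵥ star (fun i => e i o) = 1 := by
  simp only [dotProduct, Pi.star_apply, he.star_eq, he.mul_eq, if_true, he.sum_eq_one]

end Star

lemma sum_mul_mul_eq [StarRing R] {e : ι → ι → R} (he : IsMatrixUnitSystem e) {p : R} {v : ι → R}
    (hv : IsMatrixUnitColumn p v) (o i j : ι) :
    (∑ m, v m * e o m) * e i j = v i * star (v j) * ∑ m, v m * e o m := by
  have hleft : (∑ m, v m * e o m) * e i j = v i * e o j := by
    simp only [Finset.sum_mul, mul_assoc, he.mul_eq, mul_ite, mul_zero, Finset.sum_ite_eq',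
      Finset.mem_univ, if_true]
  have hright : star (v j) * ∑ m, v m * e o m = p * e o j := by
    simp only [Finset.mul_sum, ← mul_assoc, hv.star_mul_eq, ite_mul, zero_mul, Finset.sum_ite_eq,
      Finset.mem_univ, if_true]
  rw [hleft, mul_assoc, hright, ← mul_assoc, hv.mul_eq]

end Algebraic

variable {A κ : Type*} [CStarAlgebra A] {l : Filter κ} {S : κ → StarSubalgebra ℂ A}
  {e : ι → ι → A}

lemma exists_tendsto_column (he : IsMatrixUnitSystem e) (hclosed : ∀ k, IsClosed (S k : Set A))
    (happrox : IsApproximating l fun k => (S k : Set A)) (o : ι) :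
    ∃ (p : κ → A) (v : κ → ι → A), (∀ k i, v k i ∈ S k) ∧
      Tendsto v l (𝓝 fun i => e i o) ∧ ∀ᶠ k in l, IsMatrixUnitColumn (p k) (v k) := by
  obtain ⟨p, hpS, hproj, hp⟩ :=
    happrox.exists_isStarProjection_tendsto hclosed (he.isStarProjection o)
  choose x hxS hx using fun i => happrox (e i o)
  let y (k : κ) (i : ι) : A := x i k * p k
  have hy : Tendsto y l (𝓝 fun i => e i o) := tendsto_pi_nhds.2 fun i => by
    simpa only [(he.isMatrixUnitColumn o).mul_eq] using (hx i).mul hp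
  have hvp : ∀ k i, normalizeRow (y k) i * p k = normalizeRow (y k) i := fun k i => by
    simp only [normalizeRow, y, Pi.smul_apply, smul_eq_mul, mul_assoc,
      (hproj k).isIdempotentElem.eq]
  have hv := tendsto_normalizeRow hy (he.column_dotProduct_star o)
  exact ⟨p, fun k => normalizeRow (y k),
    fun k => normalizeRow_mem (hclosed k) fun i => mul_mem (hxS i k) (hpS k), hv,
    eventually_isMatrixUnitColumn hproj hvp
      (eventually_normalizeRow_dotProduct_star hy (he.column_dotProduct_star o)) hp hv
      (he.isMatrixUnitColumn o)⟩

lemma exists_tendsto_one_conj_mem (he : IsMatrixUnitSystem e)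
    (hclosed : ∀ k, IsClosed (S k : Set A))
    (happrox : IsApproximating l fun k => (S k : Set A)) :
    ∃ u : κ → A, Tendsto u l (𝓝 1) ∧
      ∀ᶠ k in l, u k ∈ unitary A ∧ ∀ i j, u k * e i j * star (u k) ∈ S k := by
  obtain _ | ⟨⟨o⟩⟩ := isEmpty_or_nonempty ι
  · exact ⟨fun _ => 1, tendsto_const_nhds, .of_forall fun _ => ⟨one_mem _, isEmptyElim⟩⟩
  obtain ⟨p, v, hvS, hv, hcolumn⟩ := he.exists_tendsto_column hclosed happrox o
  let T (k : κ) : A := ∑ m, v k m * e o m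
  have hT : Tendsto T l (𝓝 1) := by
    simpa only [he.mul_eq, if_true, he.sum_eq_one] using
      tendsto_finsetSum Finset.univ fun m _ => (hv.apply_nhds m).mul_const (e o m)
  have hTunit : ∀ᶠ k in l, IsUnit (T k) := hT.eventually (Units.isOpen.mem_nhds isUnit_one)
  refine ⟨fun k => polarUnitary (T k), tendsto_polarUnitary hT, ?_⟩
  filter_upwards [hcolumn, hTunit] with k hcol hunit
  have hu : polarUnitary (T k) ∈ unitary A := polarUnitary_mem_unitary hunit
  refine ⟨hu, fun i j => ?_⟩
  have hintertwine : polarUnitary (T k) * e i j = v k i * star (v k j) * polarUnitary (T k) := by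
    refine polarUnitary_mul_eq (he.sum_mul_mul_eq hcol o i j) ?_
    rw [he.star_eq, star_mul, star_star]
    exact he.sum_mul_mul_eq hcol o j i
  rw [hintertwine, mul_assoc, Unitary.mul_star_self_of_mem hu, mul_one]
  exact mul_mem (hvS k i) (star_mem (hvS k j))

end IsMatrixUnitSystem

section Matrix

variable {𝕜 R : Type*} [CommSemiring 𝕜] [StarRing 𝕜] [Semiring R] [Algebra 𝕜 R]

lemma isMatrixUnitSystem_apply_single [Star R] (φ : Matrix ι ι 𝕜 →⋆ₐ[𝕜] R) :
    IsMatrixUnitSystem fun i j => φ (Matrix.single i j 1) where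
  mul_eq i j k l := by
    rw [← map_mul]
    split_ifs with h
    · rw [h, Matrix.single_mul_single_same, one_mul]
    · rw [Matrix.single_mul_single_of_ne _ _ _ _ h, map_zero]
  star_eq i j := by
    rw [← map_star, Matrix.star_eq_conjTranspose, Matrix.conjTranspose_single, star_one]
  sum_eq_one := by rw [← map_sum, Matrix.sum_single_one, map_one]

lemma apply_mem_of_apply_single_mem [StarRing R] [StarModule 𝕜 R] (φ : Matrix ι ι 𝕜 →⋆ₐ[𝕜] R)
    {S : StarSubalgebra 𝕜 R} (hS : ∀ i j, φ (Matrix.single i j 1) ∈ S) (a : Matrix ι ι 𝕜) :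
    φ a ∈ S := by
  rw [Matrix.matrix_eq_sum_single a, map_sum]
  refine sum_mem fun i _ => ?_
  rw [map_sum]
  refine sum_mem fun j _ => ?_
  rw [← mul_one (a i j), ← smul_eq_mul, ← Matrix.smul_single, map_smul]
  exact S.smul_mem (hS i j) _

end Matrix

end MatrixUnits

section StarSubalgebra

/-- A star-subalgebra is isomorphic to its preimage under a star-isomorphism. -/
noncomputable def starSubalgebraComapEquiv {𝕜 A B : Type*} [CommSemiring 𝕜] [StarRing 𝕜]
    [Semiring A] [StarRing A] [Algebra 𝕜 A] [StarModule 𝕜 A] [Semiring B] [StarRing B]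
    [Algebra 𝕜 B] [StarModule 𝕜 B] (f : A ≃⋆ₐ[𝕜] B) (S : StarSubalgebra 𝕜 B) :
    S.comap (f : A →⋆ₐ[𝕜] B) ≃⋆ₐ[𝕜] S :=
  StarAlgEquiv.ofBijective
    (((f : A →⋆ₐ[𝕜] B).comp (S.comap (f : A →⋆ₐ[𝕜] B)).subtype).codRestrict S fun a => a.2)
    ⟨fun _ _ h => Subtype.ext (f.injective (congrArg Subtype.val h)), fun s =>
      ⟨⟨f.symm s, ((f.apply_symm_apply s).symm ▸ s.2 : f (f.symm s) ∈ S)⟩,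
        Subtype.ext (f.apply_symm_apply s)⟩⟩

lemma isClosed_of_starAlgEquiv_finite {𝕜 A B : Type*} [NontriviallyNormedField 𝕜] [CompleteSpace 𝕜]
    [StarRing 𝕜] [Ring A] [StarRing A] [Algebra 𝕜 A] [StarModule 𝕜 A] [TopologicalSpace A]
    [IsTopologicalAddGroup A] [ContinuousSMul 𝕜 A] [T2Space A] [Semiring B] [Star B] [Algebra 𝕜 B]
    [Module.Finite 𝕜 B] {S : StarSubalgebra 𝕜 A} (f : S ≃⋆ₐ[𝕜] B) : IsClosed (S : Set A) := by
  have : FiniteDimensional 𝕜 (Subalgebra.toSubmodule S.toSubalgebra) :=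
    Module.Finite.equiv f.toAlgEquiv.toLinearEquiv.symm
  exact Submodule.closed_of_finiteDimensional (Subalgebra.toSubmodule S.toSubalgebra)

end StarSubalgebra

theorem uhf_matrix_subalgebra_extension_general {A κ ι τ : Type*} [CStarAlgebra A] [Preorder κ]
    [IsDirectedOrder κ] (S : κ → StarSubalgebra ℂ A) (hclosed : ∀ k, IsClosed (S k : Set A))
    (hmono : Monotone S) (hdense : Dense (⋃ k, (S k : Set A))) [Fintype ι]
    (M : StarSubalgebra ℂ A) (hM : Nonempty (M ≃⋆ₐ[ℂ] Matrix ι ι ℂ)) [Finite τ] (v : τ → A)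
    {ε : ℝ} (hε : 0 < ε) :
    ∃ (k : κ) (B : StarSubalgebra ℂ A), IsClosed (B : Set A) ∧ M ≤ B ∧ Nonempty (B ≃⋆ₐ[ℂ] S k) ∧
      ∀ i, Metric.infDist (v i) (B : Set A) < ε := by
  classical
  obtain ⟨f⟩ := hM
  let φ : Matrix ι ι ℂ →⋆ₐ[ℂ] A := M.subtype.comp (f.symm : Matrix ι ι ℂ →⋆ₐ[ℂ] M)
  have : Nonempty κ := (Set.nonempty_iUnion.1 hdense.nonempty).nonempty
  have happrox : IsApproximating atTop fun k => (S k : Set A) :=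
    isApproximating_atTop_of_dense_iUnion hclosed (fun k => ⟨1, one_mem (S k)⟩) hmono hdense
  obtain ⟨u, hu, hunitary⟩ :=
    (isMatrixUnitSystem_apply_single φ).exists_tendsto_one_conj_mem hclosed happrox
  choose a haS ha using fun i => happrox (v i)
  have hclose : ∀ᶠ k in atTop, ∀ i, dist (star (u k) * a i k * u k) (v i) < ε := by
    refine eventually_all.2 fun i => ?_
    have hlim := (hu.star.mul (ha i)).mul hu
    rw [star_one, one_mul, mul_one] at hlim
    exact hlim.eventually (Metric.ball_mem_nhds _ hε)
  obtain ⟨k, ⟨huk, hconj⟩, hdist⟩ := (hunitary.and hclose).exists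
  let α : A ≃⋆ₐ[ℂ] A := Unitary.conjStarAlgAut ℂ A ⟨u k, huk⟩
  refine ⟨k, (S k).comap (α : A →⋆ₐ[ℂ] A), ?_, fun x hx => ?_, ⟨starSubalgebraComapEquiv α (S k)⟩,
    fun i => ?_⟩
  · exact (hclosed k).preimage ((continuous_const.mul continuous_id).mul continuous_const)
  · have hφ : φ (f ⟨x, hx⟩) = x := congrArg Subtype.val (f.symm_apply_apply ⟨x, hx⟩)
    exact hφ ▸ apply_mem_of_apply_single_mem φ hconj (f ⟨x, hx⟩)
  · have hmem : star (u k) * a i k * u k ∈ (S k).comap (α : A →⋆ₐ[ℂ] A) := by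
      change α (α.symm (a i k)) ∈ S k
      rw [α.apply_symm_apply]
      exact haS i k
    refine (Metric.infDist_le_dist_of_mem hmem).trans_lt ?_
    rw [dist_comm]
    exact hdist i

/-- In a unital C*-algebra admitting a matricial chain (i.e. a UHF algebra), any
finite-dimensional *-subalgebra `M` isomorphic to a full matrix algebra can be enlarged to a
closed unital *-subalgebra `B ⊇ M` isomorphic to a full matrix algebra that approximately
contains any prescribed finite family of elements. -/
theorem uhf_matrix_subalgebra_extension
    {A : Type*} [CStarAlgebra A]
    (n : ℕ → ℕ) (Ak : ℕ → StarSubalgebra ℂ A)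
    (hpos : ∀ k, 0 < n k)
    (hmono : ∀ k, Ak k ≤ Ak (k + 1))
    (hiso : ∀ k, Nonempty ((Ak k) ≃⋆ₐ[ℂ] Matrix (Fin (n k)) (Fin (n k)) ℂ))
    (hdense : Dense (⋃ k, (Ak k : Set A)))
    (M : StarSubalgebra ℂ A) (d : ℕ) (hd : 1 ≤ d)
    (hM : Nonempty (M ≃⋆ₐ[ℂ] Matrix (Fin d) (Fin d) ℂ))
    (k : ℕ) (v : Fin k → A) (ε : ℝ) (hε : 0 < ε) :
    ∃ (m : ℕ) (B : StarSubalgebra ℂ A), 1 ≤ m ∧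
      IsClosed (B : Set A) ∧ M ≤ B ∧
      Nonempty (B ≃⋆ₐ[ℂ] Matrix (Fin m) (Fin m) ℂ) ∧
      ∀ i, Metric.infDist (v i) (B : Set A) < ε := by
  have hclosed : ∀ k, IsClosed (Ak k : Set A) := fun k =>
    isClosed_of_starAlgEquiv_finite (hiso k).some
  obtain ⟨N, B, hB, hMB, ⟨f⟩, hdist⟩ := uhf_matrix_subalgebra_extension_general Ak hclosed
    (monotone_nat_of_le_succ hmono) hdense M hM v hε
  exact ⟨n N, B, hpos N, hB, hMB, (hiso N).map f.trans, hdist⟩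
end

section
/- Let A be a unital C*-algebra over ℂ admitting a matricial chain. Then for all projections p, q ∈ A and every ε > 0 there exist n ≥ 1, a closed unital *-subalgebra B of A (with 1_A ∈ B) that is *-isomorphic to M_n(ℂ), and projections p', q' ∈ B with ‖p − p'‖ < ε and ‖q − q'‖ < ε. -/
/-!
If `a` is self-adjoint and `δ = ‖a * a - a‖ < 1/4`, then the spectrum of `a` avoids `1/2`, so the
indicator function `χ` of `(1/2, ∞)` is continuous on it and `χ(a)` is a projection. Since
`|x - χ x| ≤ 2 |x * x - x|` for every real `x`, this projection is within `2 * δ` of `a`.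
Near a projection `p`, self-adjoint elements of the dense union have small `δ`, so they round to
projections near `p`; a closed star-subalgebra containing `a` also contains `χ(a)`. Directedness
puts finitely many such approximants into one subalgebra.
-/

open Filter Set Topology

section HalfIndicator

/-- The indicator function of `(1/2, ∞)`, which rounds a real number to the nearest element
of `{0, 1}`; the value at the midpoint is `0`. -/
noncomputable def halfIndicator : ℝ → ℝ := (Ioi (1 / 2)).indicator 1

lemma halfIndicator_of_le {x : ℝ} (hx : x ≤ 1 / 2) : halfIndicator x = 0 :=
  indicator_of_notMem (notMem_Ioi.2 hx) _

lemma halfIndicator_of_lt {x : ℝ} (hx : 1 / 2 < x) : halfIndicator x = 1 :=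
  indicator_of_mem (mem_Ioi.2 hx) _

lemma isIdempotentElem_halfIndicator : IsIdempotentElem halfIndicator :=
  funext fun x ↦ by simp [halfIndicator, indicator_apply]

lemma continuousOn_halfIndicator : ContinuousOn halfIndicator {1 / 2}ᶜ :=
  continuousOn_const.piecewise (by simp) continuousOn_const

lemma abs_sub_halfIndicator_le (x : ℝ) : |x - halfIndicator x| ≤ 2 * |x * x - x| := by
  have hfactor : |x * x - x| = |x| * |x - 1| := by rw [← abs_mul]; ring_nf
  rw [hfactor]
  rcases le_or_gt x (1 / 2) with hx | hx
  · rw [halfIndicator_of_le hx, sub_zero]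
    have : 1 / 2 ≤ |x - 1| := le_abs.2 <| .inr (by linarith)
    nlinarith [abs_nonneg x]
  · rw [halfIndicator_of_lt hx]
    have : 1 / 2 ≤ |x| := le_abs.2 <| .inl hx.le
    nlinarith [abs_nonneg (x - 1)]

end HalfIndicator

section FunctionalCalculus

lemma isStarProjection_cfcₙ {A : Type*} [NonUnitalRing A] [StarRing A] [TopologicalSpace A]
    [Module ℝ A] [IsScalarTower ℝ A A] [SMulCommClass ℝ A A]
    [NonUnitalContinuousFunctionalCalculus ℝ A IsSelfAdjoint]
    {f : ℝ → ℝ} (hf : IsIdempotentElem f) (a : A) : IsStarProjection (cfcₙ f a) where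
  isSelfAdjoint := cfcₙ_predicate f a
  isIdempotentElem := by
    by_cases h : ContinuousOn f (quasispectrum ℝ a) ∧ f 0 = 0
    · rw [IsIdempotentElem, ← cfcₙ_mul f f a h.1 h.2 h.1 h.2]
      exact congrArg (cfcₙ · a) hf
    · rw [not_and_or] at h
      rcases h with h | h
      · rw [cfcₙ_apply_of_not_continuousOn a h]
        exact .zero
      · rw [cfcₙ_apply_of_not_map_zero a h]
        exact .zero

variable {A : Type*} [NonUnitalNormedRing A] [StarRing A] [NormedSpace ℝ A]
  [IsScalarTower ℝ A A] [SMulCommClass ℝ A A]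
  [NonUnitalIsometricContinuousFunctionalCalculus ℝ A IsSelfAdjoint] {a p : A}

/-- The spectral projection `χ(a)` of a self-adjoint element `a`, where `χ` is the indicator
function of `(1/2, ∞)`. Its junk value is `0`, taken when `a` is not self-adjoint or `χ` is not
continuous on the quasispectrum of `a`. -/
noncomputable def halfSpectralProjection (a : A) : A := cfcₙ halfIndicator a

lemma isStarProjection_halfSpectralProjection (a : A) :
    IsStarProjection (halfSpectralProjection a) :=
  isStarProjection_cfcₙ isIdempotentElem_halfIndicator a

lemma abs_mul_self_sub_self_le_norm (ha : IsSelfAdjoint a) {x : ℝ}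
    (hx : x ∈ quasispectrum ℝ a) : |x * x - x| ≤ ‖a * a - a‖ := by
  have hcfc : cfcₙ (fun y : ℝ ↦ y * y - y) a = a * a - a := by
    rw [cfcₙ_sub (fun y : ℝ ↦ y * y) (fun y ↦ y) a, cfcₙ_mul (fun y : ℝ ↦ y) (fun y ↦ y) a,
      cfcₙ_id' ℝ a]
  simpa only [hcfc, Real.norm_eq_abs] using norm_apply_le_norm_cfcₙ (fun y : ℝ ↦ y * y - y) a hx

lemma half_notMem_quasispectrum (ha : IsSelfAdjoint a) (h : ‖a * a - a‖ < 1 / 4) :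
    (1 / 2 : ℝ) ∉ quasispectrum ℝ a := fun hhalf ↦ by
  have := (abs_mul_self_sub_self_le_norm ha hhalf).trans_lt h
  norm_num at this

lemma norm_sub_halfSpectralProjection_le (ha : IsSelfAdjoint a) (h : ‖a * a - a‖ < 1 / 4) :
    ‖a - halfSpectralProjection a‖ ≤ 2 * ‖a * a - a‖ := by
  have hcont : ContinuousOn halfIndicator (quasispectrum ℝ a) :=
    continuousOn_halfIndicator.mono <|
      subset_compl_singleton_iff.2 (half_notMem_quasispectrum ha h)
  have hzero : halfIndicator 0 = 0 := halfIndicator_of_le (by norm_num)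
  have hcfc : a - halfSpectralProjection a = cfcₙ (fun x ↦ x - halfIndicator x) a := by
    rw [cfcₙ_sub (fun x : ℝ ↦ x) halfIndicator a, cfcₙ_id' ℝ a, halfSpectralProjection]
  rw [hcfc]
  refine norm_cfcₙ_le fun x hx ↦ (abs_sub_halfIndicator_le x).trans ?_
  gcongr
  exact abs_mul_self_sub_self_le_norm ha hx

lemma tendsto_halfSpectralProjection (hp : IsStarProjection p) :
    Tendsto halfSpectralProjection (𝓝[{a | IsSelfAdjoint a}] p) (𝓝 p) := by
  have hdefect : Tendsto (fun a : A ↦ ‖a * a - a‖) (𝓝[{a | IsSelfAdjoint a}] p) (𝓝 0) := by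
    have hcont : Continuous fun a : A ↦ ‖a * a - a‖ := by fun_prop
    simpa [hp.isIdempotentElem.eq] using (hcont.tendsto p).mono_left nhdsWithin_le_nhds
  have hsub : Tendsto (fun a : A ↦ a - halfSpectralProjection a)
      (𝓝[{a | IsSelfAdjoint a}] p) (𝓝 0) := by
    refine squeeze_zero_norm' ?_ (by simpa using hdefect.const_mul 2)
    have hsmall := hdefect.eventually_lt_const (by norm_num : (0 : ℝ) < 1 / 4)
    filter_upwards [self_mem_nhdsWithin, hsmall] with a ha hlt
      using norm_sub_halfSpectralProjection_le ha hlt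
  simpa using (tendsto_nhdsWithin_of_tendsto_nhds tendsto_id).sub hsub

end FunctionalCalculus

section Approximation

lemma mem_closure_inter_isSelfAdjoint {A : Type*} [AddCommGroup A] [Module ℝ A]
    [StarAddMonoid A] [StarModule ℝ A] [TopologicalSpace A] [ContinuousAdd A]
    [ContinuousConstSMul ℝ A] [ContinuousStar A] {s : Set A} {a : A}
    (hs : MapsTo (fun b ↦ (selfAdjointPart ℝ b : A)) s s) (ha : IsSelfAdjoint a)
    (has : a ∈ closure s) : a ∈ closure (s ∩ {b | IsSelfAdjoint b}) := by
  have hcont : Continuous fun b : A ↦ (selfAdjointPart ℝ b : A) := by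
    simp only [selfAdjointPart_apply_coe]
    fun_prop
  have hmaps : MapsTo (fun b ↦ (selfAdjointPart ℝ b : A)) s (s ∩ {b | IsSelfAdjoint b}) :=
    fun b hb ↦ ⟨hs hb, (selfAdjointPart ℝ b).2⟩
  simpa only [ha.coe_selfAdjointPart_apply ℝ] using map_mem_closure hcont has hmaps

lemma selfAdjointPart_mem {A σ : Type*} [AddCommGroup A] [Module ℝ A] [StarAddMonoid A]
    [StarModule ℝ A] [SetLike σ A] [AddMemClass σ A] [SMulMemClass σ ℝ A] [StarMemClass σ A]
    {S : σ} {a : A} (ha : a ∈ S) : (selfAdjointPart ℝ a : A) ∈ S := by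
  rw [selfAdjointPart_apply_coe]
  exact SMulMemClass.smul_mem _ (add_mem ha (star_mem ha))

variable {A σ : Type*} [NonUnitalNormedRing A] [StarRing A] [ContinuousStar A]
  [NormedSpace ℝ A] [IsScalarTower ℝ A A] [SMulCommClass ℝ A A] [StarModule ℝ A]
  [NonUnitalIsometricContinuousFunctionalCalculus ℝ A IsSelfAdjoint]
  [SetLike σ A] [NonUnitalSubringClass σ A] [SMulMemClass σ ℝ A] [StarMemClass σ A]

lemma halfSpectralProjection_mem {S : σ} (hS : IsClosed (S : Set A)) {a : A} (ha : a ∈ S) :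
    halfSpectralProjection a ∈ S :=
  cfcₙ_mem (𝕜' := ℝ) (hs := hS) halfIndicator ha

variable {ι : Type*} {S : ι → σ}

lemma mem_closure_iUnion_inter_isStarProjection (hS : ∀ i, IsClosed (S i : Set A)) {p : A}
    (hp : IsStarProjection p) (hpS : p ∈ closure (⋃ i, (S i : Set A))) :
    p ∈ closure ((⋃ i, (S i : Set A)) ∩ {e | IsStarProjection e}) := by
  have hsa : p ∈ closure ((⋃ i, (S i : Set A)) ∩ {a | IsSelfAdjoint a}) :=
    mem_closure_inter_isSelfAdjoint
      (mapsTo_iUnion_iUnion fun _ _ ha ↦ selfAdjointPart_mem ha) hp.isSelfAdjoint hpS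
  refine mem_closure_of_frequently_of_tendsto ?_ (tendsto_halfSpectralProjection hp)
  rw [frequently_nhdsWithin_iff]
  refine (mem_closure_iff_frequently.1 hsa).mono fun a ⟨haS, ha⟩ ↦ ⟨⟨?_, ?_⟩, ha⟩
  · obtain ⟨i, hi⟩ := mem_iUnion.1 haS
    exact mem_iUnion_of_mem i (halfSpectralProjection_mem (hS i) hi)
  · exact isStarProjection_halfSpectralProjection a

theorem uhf_projections_approx_in_matrix_subalgebra_general {κ : Type*} [Finite κ]
    (hdir : Directed (· ⊆ ·) fun i ↦ (S i : Set A)) (hS : ∀ i, IsClosed (S i : Set A))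
    (hdense : Dense (⋃ i, (S i : Set A))) {p : κ → A} (hp : ∀ j, IsStarProjection (p j))
    {ε : ℝ} (hε : 0 < ε) :
    ∃ i, ∃ e : κ → A, ∀ j, e j ∈ S i ∧ IsStarProjection (e j) ∧ ‖p j - e j‖ < ε := by
  have happrox (j : κ) : ∃ e, (∃ i, e ∈ S i) ∧ IsStarProjection e ∧ ‖p j - e‖ < ε := by
    obtain ⟨e, ⟨heS, he⟩, hdist⟩ := Metric.mem_closure_iff.1
      (mem_closure_iUnion_inter_isStarProjection hS (hp j) (hdense (p j))) ε hε
    exact ⟨e, mem_iUnion.1 heS, he, dist_eq_norm (p j) e ▸ hdist⟩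
  choose e hmem he hlt using happrox
  choose index hindex using hmem
  have : Nonempty ι := nonempty_iUnion.1 hdense.nonempty |>.nonempty
  obtain ⟨i, hi⟩ := hdir.finite_le index
  exact ⟨i, e, fun j ↦ ⟨hi j (hindex j), he j, hlt j⟩⟩

end Approximation

lemma isClosed_of_starAlgEquiv {𝕜 A B : Type*} [NontriviallyNormedField 𝕜] [CompleteSpace 𝕜]
    [StarRing 𝕜] [Ring A] [StarRing A] [Algebra 𝕜 A] [StarModule 𝕜 A] [TopologicalSpace A]
    [IsTopologicalAddGroup A] [ContinuousSMul 𝕜 A] [T2Space A] [Ring B] [Star B]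
    [Algebra 𝕜 B] [FiniteDimensional 𝕜 B] {S : StarSubalgebra 𝕜 A} (e : S ≃⋆ₐ[𝕜] B) :
    IsClosed (S : Set A) :=
  have : FiniteDimensional 𝕜 S.toSubalgebra.toSubmodule :=
    Module.Finite.equiv (N := S) e.symm.toAlgEquiv.toLinearEquiv
  S.toSubalgebra.toSubmodule.closed_of_finiteDimensional

/-- In a unital C*-algebra admitting a matricial chain (i.e. a UHF algebra), any
two projections can be simultaneously approximated by projections lying in a single closed
unital *-subalgebra isomorphic to a full matrix algebra. -/
theorem uhf_projections_approx_in_matrix_subalgebra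
    {A : Type*} [CStarAlgebra A]
    (n : ℕ → ℕ) (Ak : ℕ → StarSubalgebra ℂ A)
    (hpos : ∀ k, 0 < n k)
    (hmono : ∀ k, Ak k ≤ Ak (k + 1))
    (hiso : ∀ k, Nonempty ((Ak k) ≃⋆ₐ[ℂ] Matrix (Fin (n k)) (Fin (n k)) ℂ))
    (hdense : Dense (⋃ k, (Ak k : Set A)))
    (p q : A)
    (hp : star p = p ∧ p * p = p)
    (hq : star q = q ∧ q * q = q)
    (ε : ℝ) (hε : 0 < ε) :
    ∃ (m : ℕ) (B : StarSubalgebra ℂ A) (p' q' : A), 1 ≤ m ∧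
      IsClosed (B : Set A) ∧
      Nonempty (B ≃⋆ₐ[ℂ] Matrix (Fin m) (Fin m) ℂ) ∧
      p' ∈ B ∧ q' ∈ B ∧
      (star p' = p' ∧ p' * p' = p') ∧ (star q' = q' ∧ q' * q' = q') ∧
      ‖p - p'‖ < ε ∧ ‖q - q'‖ < ε := by
  have := SMulMemClass.ofIsScalarTower (StarSubalgebra ℂ A) ℝ ℂ A
  have hclosed (k : ℕ) : IsClosed (Ak k : Set A) := isClosed_of_starAlgEquiv (hiso k).some
  have hdir : Directed (· ⊆ ·) fun k ↦ (Ak k : Set A) :=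
    Monotone.directed_le (monotone_nat_of_le_succ hmono)
  have hproj : ∀ j, IsStarProjection (![p, q] j) :=
    Fin.forall_fin_two.2 ⟨⟨hp.2, hp.1⟩, ⟨hq.2, hq.1⟩⟩
  obtain ⟨k, e, he⟩ := uhf_projections_approx_in_matrix_subalgebra_general hdir hclosed hdense
    hproj hε
  obtain ⟨⟨hpk, hp', hpε⟩, hqk, hq', hqε⟩ := Fin.forall_fin_two.1 he
  exact ⟨n k, Ak k, e 0, e 1, hpos k, hclosed k, hiso k, hpk, hqk,
    ⟨hp'.isSelfAdjoint, hp'.isIdempotentElem⟩, ⟨hq'.isSelfAdjoint, hq'.isIdempotentElem⟩,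
    hpε, hqε⟩
end

section
/- Let ε : ℕ → ℕ∞ be any function, and let G be the additive subgroup of ℚ generated by the set {x : ℚ | ∃ p m, p is prime ∧ (m : ℕ∞) ≤ ε p ∧ x = 1/(p^m)}. Then for every prime p and every natural number m, one has 1/(p^m) ∈ G if and only if (m : ℕ∞) ≤ ε p. Equivalently, the element 1 ∈ G is divisible by p^m in G (there exists g ∈ G with p^m · g = 1) exactly when (m : ℕ∞) ≤ ε p. -/
/-! If `ε p = n` is finite, every generator of `ℚ(ε)` lies in the `p`-adic ball of radius `p ^ n`:
powers of the other primes are `p`-adic units, and the reciprocal of `p ^ k` has absolute value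
`p ^ k`. This ball is an additive subgroup since the absolute value is ultrametric, so it contains
`ℚ(ε)`, and hence `1 / p ^ m ∈ ℚ(ε)` forces `m ≤ n`. -/

open WithZero

section PadicValuation

variable {p : ℕ} [Fact p.Prime]

theorem padicValuation_one_div_self_pow (k : ℕ) :
    Rat.padicValuation p (1 / (p : ℚ) ^ k) = exp (k : ℤ) := by
  rw [map_div₀, map_one, map_pow, Rat.padicValuation_self, ← exp_nsmul, one_div, ← exp_neg]
  simp

theorem padicValuation_one_div_natCast_pow_of_not_dvd {a : ℕ} (ha : ¬p ∣ a) (k : ℕ) :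
    Rat.padicValuation p (1 / (a : ℚ) ^ k) = 1 := by
  have unit_a : Rat.padicValuation p (a : ℚ) = 1 :=
    Int.padicValuation_eq_one_iff.2 (mod_cast ha)
  rw [map_div₀, map_one, map_pow, unit_a, one_pow, div_one]

end PadicValuation

/-- The group `ℚ(ε)` of a supernatural number `ε`, that is, `K₀` of the UHF algebra of type `ε`.
The exponents are given on all of `ℕ`, but only those at primes matter. -/
def supernaturalSubgroup (ε : ℕ → ℕ∞) : AddSubgroup ℚ :=
  AddSubgroup.closure {x : ℚ | ∃ p m : ℕ, p.Prime ∧ (m : ℕ∞) ≤ ε p ∧ x = 1 / (p : ℚ) ^ m}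

namespace supernaturalSubgroup

variable {ε : ℕ → ℕ∞} {p : ℕ}

theorem one_div_prime_pow_mem {m : ℕ} (hp : p.Prime) (hm : (m : ℕ∞) ≤ ε p) :
    1 / (p : ℚ) ^ m ∈ supernaturalSubgroup ε :=
  AddSubgroup.subset_closure ⟨p, m, hp, hm, rfl⟩

theorem le_leAddSubgroup_padicValuation [hp : Fact p.Prime] {n : ℕ} (hn : ε p ≤ n) :
    supernaturalSubgroup ε ≤ (Rat.padicValuation p).leAddSubgroup (exp (n : ℤ)) := by
  refine (AddSubgroup.closure_le _).2 ?_
  rintro _ ⟨q, k, hq, hk, rfl⟩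
  change Rat.padicValuation p (1 / (q : ℚ) ^ k) ≤ exp (n : ℤ)
  obtain rfl | hpq := eq_or_ne p q
  · have hkn : k ≤ n := mod_cast hk.trans hn
    rw [padicValuation_one_div_self_pow]
    exact exp_le_exp.2 (mod_cast hkn)
  · have not_dvd : ¬p ∣ q := fun h ↦ hpq ((Nat.prime_dvd_prime_iff_eq hp.out hq).1 h)
    rw [padicValuation_one_div_natCast_pow_of_not_dvd not_dvd, ← exp_zero]
    exact exp_le_exp.2 n.cast_nonneg

theorem one_div_prime_pow_mem_iff {m : ℕ} (hp : p.Prime) :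
    1 / (p : ℚ) ^ m ∈ supernaturalSubgroup ε ↔ (m : ℕ∞) ≤ ε p := by
  refine ⟨fun hmem ↦ ?_, one_div_prime_pow_mem hp⟩
  have : Fact p.Prime := ⟨hp⟩
  cases hε : ε p with
  | top => exact le_top
  | coe n =>
    have hle : Rat.padicValuation p (1 / (p : ℚ) ^ m) ≤ exp (n : ℤ) :=
      le_leAddSubgroup_padicValuation hε.le hmem
    rw [padicValuation_one_div_self_pow, exp_le_exp] at hle
    exact_mod_cast hle

end supernaturalSubgroup

/-- for a supernatural number `ε : ℕ → ℕ∞`, in the additive subgroup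
`ℚ(ε) ≤ ℚ` generated by the rationals `1 / p ^ m` with `p` prime and `m ≤ ε p`, one has
`1 / p ^ m ∈ ℚ(ε)` iff `m ≤ ε p`; equivalently, `1` is divisible by `p ^ m` in `ℚ(ε)` iff
`m ≤ ε p`. -/
theorem mem_supernatural_subgroup_iff
    (ε : ℕ → ℕ∞)
    (G : AddSubgroup ℚ)
    (hG : G = AddSubgroup.closure
      {x : ℚ | ∃ p m : ℕ, p.Prime ∧ (m : ℕ∞) ≤ ε p ∧ x = 1 / (p : ℚ) ^ m})
    (p m : ℕ) (hp : p.Prime) :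
    ((1 / (p : ℚ) ^ m ∈ G) ↔ (m : ℕ∞) ≤ ε p) ∧
    ((∃ g ∈ G, ((p : ℚ) ^ m) * g = 1) ↔ (m : ℕ∞) ≤ ε p) := by
  obtain rfl : G = supernaturalSubgroup ε := hG
  have hpm : (p : ℚ) ^ m ≠ 0 := pow_ne_zero m (mod_cast hp.ne_zero)
  have mem_iff : 1 / (p : ℚ) ^ m ∈ supernaturalSubgroup ε ↔ (m : ℕ∞) ≤ ε p :=
    supernaturalSubgroup.one_div_prime_pow_mem_iff hp
  refine ⟨mem_iff, ?_⟩
  simpa only [mul_eq_one_iff_inv_eq₀ hpm, exists_eq_right', one_div] using mem_iff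
end
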